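/- Let Γ = ℤ^6 ⋊ ℤ/12 where the generator of ℤ/12 acts on ℤ^6 by the matrix [[0,0,0,0,0,-1],[1,0,0,0,0,-1],[0,1,0,0,0,0],[0,0,1,0,0,1],[0,0,0,1,0,0],[0,0,0,0,1,-1]], and let G = ℤ/12, L = ℤ^6 with this action. Then there exists k ≥ 0 such that H^k(Γ, ℤ) is not isomorphic to ⊕_{i+j=k} H^i(G, H^j(L, ℤ)). -/

import Mathlib

open Matrix

namespace Crystal

/-- The lattice `ℤ^n`, written multiplicatively so that it can be a factor of a semidirect
product of groups. -/
abbrev Lat (n : ℕ) : Type := Multiplicative (Fin n → ℤ)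

/-- The invertible integer matrix determined by `M` with `M ^ (m + 1) = 1`. -/
def matUnit {n : ℕ} (M : Matrix (Fin n) (Fin n) ℤ) (m : ℕ) (hm : M ^ (m + 1) = 1) :
    (Matrix (Fin n) (Fin n) ℤ)ˣ :=
  ⟨M, M ^ m, by rw [← pow_succ']; exact hm, by rw [← pow_succ]; exact hm⟩

/-- Linear automorphisms of `ℤ^n` as multiplicative automorphisms of the multiplicative
version of `ℤ^n`. -/
def linToAut (n : ℕ) : ((Fin n → ℤ) ≃ₗ[ℤ] (Fin n → ℤ)) →* MulAut (Lat n) :=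
  MonoidHom.mk' (fun e => AddEquiv.toMultiplicative e.toAddEquiv) (fun _ _ => rfl)

/-- An invertible integer matrix acts on the (multiplicative) lattice `ℤ^n` by (left)
matrix-vector multiplication. -/
def glToAut (n : ℕ) : (Matrix (Fin n) (Fin n) ℤ)ˣ →* MulAut (Lat n) :=
  (linToAut n).comp
    ((LinearMap.GeneralLinearGroup.generalLinearEquiv ℤ (Fin n → ℤ)).toMonoidHom.comp
      (Matrix.GeneralLinearGroup.toLin).toMonoidHom)

/-- The homomorphism from `ℤ/m` (written multiplicatively) to a group `G` sending the
generator `1` to a chosen element `α` satisfying `α ^ m = 1`. -/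
def zmodHom {G : Type*} [Group G] (m : ℕ) [NeZero m] (α : G) (hα : α ^ m = 1) :
    Multiplicative (ZMod m) →* G :=
  MonoidHom.mk' (fun g => α ^ (g.toAdd.val)) (by
    intro a b
    show α ^ (ZMod.val (a.toAdd + b.toAdd)) = α ^ (ZMod.val a.toAdd) * α ^ (ZMod.val b.toAdd)
    rw [ZMod.val_add, ← pow_eq_pow_mod _ hα, pow_add])

/-- The action of `ℤ/q` on the lattice `ℤ^n` in which the generator `1` of `ℤ/q` acts by left
multiplication by the integer matrix `M`; `M` is required to satisfy `M ^ q = 1`. -/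
def matAction {n : ℕ} (q : ℕ) [NeZero q] (M : Matrix (Fin n) (Fin n) ℤ)
    (hq : M ^ q = 1) : Multiplicative (ZMod q) →* MulAut (Lat n) :=
  zmodHom q (glToAut n (matUnit M (q - 1) (by
      rwa [Nat.sub_add_cancel (Nat.one_le_iff_ne_zero.2 (NeZero.ne q))])))
    (by
      rw [← map_pow]
      convert map_one (glToAut n)
      ext i j
      rw [Units.val_pow_eq_pow_val]
      simp [matUnit, hq])

/-- The crystallographic group `ℤ^n ⋊ ℤ/q` in which the generator `1` of `ℤ/q` acts on the
lattice `ℤ^n` by left multiplication by the integer matrix `M` (with `M ^ q = 1`). -/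
abbrev Crys {n : ℕ} (q : ℕ) [NeZero q] (M : Matrix (Fin n) (Fin n) ℤ) (hq : M ^ q = 1) : Type :=
  SemidirectProduct (Lat n) (Multiplicative (ZMod q)) (matAction q M hq)


open CategoryTheory groupCohomology

variable {k : Type} [CommRing k]

lemma comp_contractNth {G H : Type*} [Monoid G] [Monoid H] (f : G →* H) {n : ℕ}
    (j : Fin (n + 1)) (g : Fin (n + 1) → G) (i : Fin n) :
    f (Fin.contractNth j (· * ·) g i) = Fin.contractNth j (· * ·) (fun l => f (g l)) i := by
  rcases lt_trichotomy (i : ℕ) j with h | h | h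
  · rw [Fin.contractNth_apply_of_lt _ _ _ _ h, Fin.contractNth_apply_of_lt _ _ _ _ h]
  · rw [Fin.contractNth_apply_of_eq _ _ _ _ h, Fin.contractNth_apply_of_eq _ _ _ _ h,
      _root_.map_mul]
  · rw [Fin.contractNth_apply_of_gt _ _ _ _ h, Fin.contractNth_apply_of_gt _ _ _ _ h]

/-- The map of inhomogeneous cochain complexes induced (contravariantly in the group,
covariantly in the coefficients) by a group homomorphism `f : H →* G` together with a
compatible linear map `τ : A → B` of coefficients. -/
def cochainsMap {G H : Type} [Group G] [Group H] (A : Rep k G) (B : Rep k H)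
    (f : H →* G) (τ : A →ₗ[k] B)
    (hcomp : ∀ (h : H) (a : A), τ (A.ρ (f h) a) = B.ρ h (τ a)) :
    inhomogeneousCochains A ⟶ inhomogeneousCochains B where
  f n := ModuleCat.ofHom
    { toFun := fun F v => τ (F (fun i => f (v i)))
      map_add' := fun x y => by funext v; simp
      map_smul' := fun r x => by funext v; simp }
  comm' i j hij := by
    have hij' : i + 1 = j := hij
    subst hij'
    rw [inhomogeneousCochains.d_def, inhomogeneousCochains.d_def]
    ext F v
    show (inhomogeneousCochains.d B i) (fun w => τ (F (fun l => f (w l)))) v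
      = τ ((inhomogeneousCochains.d A i) F (fun l => f (v l)))
    simp only [inhomogeneousCochains.d_hom_apply, map_add, map_sum, _root_.map_smul]
    congr 1
    · exact (hcomp (v 0) _).symm
    · refine Finset.sum_congr rfl fun j' _ => ?_
      have hc : (fun l => f (j'.contractNth (· * ·) v l))
          = j'.contractNth (· * ·) (fun l => f (v l)) := by
        funext l
        exact comp_contractNth f j' v l
      rw [hc]

lemma cochainsMap_eq_id {G : Type} [Group G] (A : Rep k G) (f : G →* G) (τ : A →ₗ[k] A)
    (hcomp : ∀ (h : G) (a : A), τ (A.ρ (f h) a) = A.ρ h (τ a))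
    (hf : ∀ x, f x = x) (hτ : ∀ a, τ a = a) :
    cochainsMap A A f τ hcomp = 𝟙 _ := by
  apply HomologicalComplex.Hom.ext
  funext n
  ext F v
  show τ (F (fun i => f (v i))) = F v
  simp only [hf, hτ]

lemma cochainsMap_comp {G H K : Type} [Group G] [Group H] [Group K]
    (A : Rep k G) (B : Rep k H) (C : Rep k K)
    (f₁ : H →* G) (τ₁ : A →ₗ[k] B) (h₁ : ∀ (h : H) (a : A), τ₁ (A.ρ (f₁ h) a) = B.ρ h (τ₁ a))
    (f₂ : K →* H) (τ₂ : B →ₗ[k] C) (h₂ : ∀ (h : K) (a : B), τ₂ (B.ρ (f₂ h) a) = C.ρ h (τ₂ a))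
    (f₃ : K →* G) (τ₃ : A →ₗ[k] C) (h₃ : ∀ (h : K) (a : A), τ₃ (A.ρ (f₃ h) a) = C.ρ h (τ₃ a))
    (hf : ∀ x, f₁ (f₂ x) = f₃ x) (hτ : ∀ a, τ₂ (τ₁ a) = τ₃ a) :
    cochainsMap A B f₁ τ₁ h₁ ≫ cochainsMap B C f₂ τ₂ h₂ = cochainsMap A C f₃ τ₃ h₃ := by
  apply HomologicalComplex.Hom.ext
  funext n
  ext F v
  show τ₂ (τ₁ (F (fun i => f₁ (f₂ (v i))))) = τ₃ (F (fun i => f₃ (v i)))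
  simp only [hf]
  exact hτ _

/-- Given an action `φ` of a group `G` on a group `L` and a representation `ψ` of `G` on a
`k`-module `V`, this is `H^j(L, V)` (with `L` acting trivially on the coefficients `V`),
endowed with the `G`-action functorially induced by the action of `G` on `L` and on `V`:
`g` acts via the conjugation automorphism `φ g⁻¹` of `L` and via `ψ g` on `V`. -/
noncomputable def cohRep {G L V : Type} [Group G] [Group L] [AddCommGroup V] [Module k V]
    (φ : G →* MulAut L) (ψ : Representation k G V) (j : ℕ) : Rep k G :=
  Rep.of (X := groupCohomology (Rep.trivial k L V) j)
    { toFun := fun g => ModuleCat.Hom.hom <| HomologicalComplex.homologyMap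
        (cochainsMap (Rep.trivial k L V) (Rep.trivial k L V) (φ g⁻¹).toMonoidHom (ψ g)
          (fun _ _ => rfl)) j
      map_one' := by
        have h := cochainsMap_eq_id (Rep.trivial k L V) (φ 1⁻¹).toMonoidHom (ψ 1)
          (fun _ _ => rfl) (fun x => by simp) (fun a => by simp)
        exact congrArg ModuleCat.Hom.hom
          ((congrArg (fun c => HomologicalComplex.homologyMap c j) h).trans
            (HomologicalComplex.homologyMap_id _ j))
      map_mul' := fun g₁ g₂ => by
        have h := cochainsMap_comp (Rep.trivial k L V) (Rep.trivial k L V) (Rep.trivial k L V)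
          (φ g₂⁻¹).toMonoidHom (ψ g₂) (fun _ _ => rfl)
          (φ g₁⁻¹).toMonoidHom (ψ g₁) (fun _ _ => rfl)
          (φ (g₁ * g₂)⁻¹).toMonoidHom (ψ (g₁ * g₂)) (fun _ _ => rfl)
          (fun x => by simp [_root_.mul_inv_rev]) (fun a => by simp)
        rw [← h, HomologicalComplex.homologyMap_comp]
        rfl }


/-- `H^i(G, H^j(L, ℤ))`: the `i`-th cohomology of the cyclic group `ℤ/q` with coefficients in
the `j`-th cohomology of the lattice `ℤ^n` (with trivial `ℤ` coefficients), where the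
`ℤ/q`-action on `H^j(ℤ^n, ℤ)` is the one functorially induced by the matrix action on the
lattice. -/
noncomputable abbrev cohOfCoh {n : ℕ} (q : ℕ) [NeZero q] (M : Matrix (Fin n) (Fin n) ℤ)
    (hq : M ^ q = 1) (i j : ℕ) : ModuleCat ℤ :=
  groupCohomology
    (cohRep (matAction q M hq) (1 : Representation ℤ (Multiplicative (ZMod q)) ℤ) j) i

/-- `H^k(Γ, ℤ)` for `Γ = ℤ^n ⋊ ℤ/q`, with trivial coefficients `ℤ`. -/
noncomputable abbrev cohCrys {n : ℕ} (q : ℕ) [NeZero q] (M : Matrix (Fin n) (Fin n) ℤ)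
    (hq : M ^ q = 1) (k : ℕ) : ModuleCat ℤ :=
  groupCohomology (Rep.trivial ℤ (Crys q M hq) ℤ) k

end Crystal

/-- The holonomy matrix. -/
def holM : Matrix (Fin 6) (Fin 6) ℤ := !![0, 0, 0, 0, 0, -1; 1, 0, 0, 0, 0, -1; 0, 1, 0, 0, 0, 0; 0, 0, 1, 0, 0, 1; 0, 0, 0, 1, 0, 0; 0, 0, 0, 0, 1, -1]

lemma holM_pow : holM ^ 12 = 1 := by decide

/-- `H^k(ℤ^6 ⋊ ℤ/12, ℤ)`, where the generator of `ℤ/12` acts on `ℤ^6` by left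
multiplication by the matrix `holM`. -/
noncomputable abbrev H (k : ℕ) : ModuleCat ℤ := Crystal.cohCrys 12 holM holM_pow k

/-- `H^i(ℤ/12, H^j(ℤ^6, ℤ))`, with the functorially induced action on coefficients. -/
noncomputable abbrev Hc (i j : ℕ) : ModuleCat ℤ := Crystal.cohOfCoh 12 holM holM_pow i j

/-!
Both sides differ in degree `4`. On the right, `H²(G, H²(L))` and `H⁴(G, H⁰(L))` each contain a
class `u` with `4u = 0` and `2u ≠ 0`, so the doubles of the `4`-torsion classes do not lie in a
cyclic subgroup. In `H⁴(Γ, ℤ)` they do.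

Let `t` be the generator of `H²(G, ℤ)`, pulled back to `Γ`. A `4`-torsion class `x` of `Γ` vanishes
on `L`, whose cohomology is torsion-free. The action of `G` on `H³(L)` is such that `3x = t y` for
some `y` in `H²(Γ, ℤ)`. Up to classes which vanish on `L`, the class `6y` is an integral combination
of three classes annihilated by `t`. Two of them are norms of classes in `H²(L)`; the third is the
norm of a cochain whose coboundary is `(g - 1) B`, where `B` represents a `G`-invariant class in
`H³(L)` and is itself not invariant. This is a nonzero differential of the spectral sequence, and it
is the reason why the decomposition fails. Finally, `3 (M - 1)⁻¹` is integral for the holonomy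
matrix `M`, so `3` times a class in `H²(Γ, ℤ)` vanishing on `L` is a multiple of `t`. Together,
`54 x` is a multiple of `t²`, and `54 x = 2 x`.
-/

namespace Crystal

/-! ### Homogeneous cochains -/

/-- Integral homogeneous cochains on a type `X` in curried form: functions of `n` arguments, so that
a cochain of degree `j` lives in `HomCochain X (j + 1)` and `HomCochain X 0` is the augmentation. -/
def HomCochain (X : Type) : ℕ → Type
  | 0 => ℤ
  | n + 1 => X → HomCochain X n

namespace HomCochain

section Basic

variable {X : Type} {n : ℕ}

instance instAddCommGroup (X : Type) : ∀ n, AddCommGroup (HomCochain X n)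
  | 0 => inferInstanceAs (AddCommGroup ℤ)
  | n + 1 => @Pi.addCommGroup X (fun _ => HomCochain X n) fun _ => instAddCommGroup X n

@[ext]
lemma ext {f g : HomCochain X (n + 1)} (h : ∀ y, f y = g y) : f = g := funext h

lemma zero_apply (y : X) : (0 : HomCochain X (n + 1)) y = (0 : HomCochain X n) := rfl

lemma add_apply (f g : HomCochain X (n + 1)) (y : X) :
    (f + g) y = (f y + g y : HomCochain X n) := rfl

lemma sub_apply (f g : HomCochain X (n + 1)) (y : X) :
    (f - g) y = (f y - g y : HomCochain X n) := rfl

/-- Evaluation of the first argument as a homomorphism. -/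
def eval (y : X) : HomCochain X (n + 1) →+ HomCochain X n where
  toFun f := f y
  map_zero' := rfl
  map_add' _ _ := rfl

lemma zsmul_apply (m : ℤ) (f : HomCochain X (n + 1)) (y : X) :
    (m • f) y = (m • f y : HomCochain X n) := map_zsmul (eval y) m f

lemma sum_apply {ι : Type} (s : Finset ι) (f : ι → HomCochain X (n + 1)) (y : X) :
    (∑ i ∈ s, f i) y = (∑ i ∈ s, f i y : HomCochain X n) := map_sum (eval y) f s

lemma eq_zero_of_zsmul_eq_zero {N : ℤ} (hN : N ≠ 0) :
    ∀ {n : ℕ} {f : HomCochain X n}, N • f = 0 → f = 0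
  | 0, _, h => (Int.mul_eq_zero.1 h).resolve_left hN
  | _ + 1, f, h => ext fun y => eq_zero_of_zsmul_eq_zero hN <| by rw [← zsmul_apply, h, zero_apply]

/-- The homogeneous coboundary map, via
`(d f)(y, y₁, …) = f(y₁, …) - (d (f y))(y₁, …)`. -/
def d : ∀ {n : ℕ}, HomCochain X n →+ HomCochain X (n + 1)
  | 0 => { toFun := fun c _ => c, map_zero' := rfl, map_add' := fun _ _ => rfl }
  | _ + 1 =>
    { toFun := fun f y => f - d (f y)
      map_zero' := by ext y : 1; rw [zero_apply, map_zero, sub_zero, zero_apply]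
      map_add' := fun f g => by
        ext y : 1
        simp only [add_apply, map_add]
        exact add_sub_add_comm _ _ _ _ }

lemma d_zero_apply (c : HomCochain X 0) (y : X) : d c y = c := rfl

lemma d_apply (f : HomCochain X (n + 1)) (y : X) : d f y = f - d (f y) := rfl

lemma d_d : ∀ {n : ℕ} (f : HomCochain X n), d (d f) = 0
  | 0, f => by ext y : 1; rw [d_apply, d_zero_apply, sub_self, zero_apply]
  | _ + 1, f => by
    ext y : 1
    rw [d_apply, d_apply, map_sub, d_d (f y), sub_zero, sub_self, zero_apply]

lemma eq_d_apply_of_d_eq_zero {f : HomCochain X (n + 1)} (h : d f = 0) (y : X) : f = d (f y) :=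
  sub_eq_zero.1 (congrFun h y)

/-- The cochain `y ↦ S y y`, obtained from a family of cochains by letting the index be the first
argument. -/
def diag (S : X → HomCochain X (n + 1)) : HomCochain X (n + 1) := fun y => S y y

lemma diag_apply (S : X → HomCochain X (n + 1)) (y : X) : diag S y = S y y := rfl

/-- Precomposition of a cochain with `σ` in every argument. -/
def pullback (σ : X → X) : ∀ {n : ℕ}, HomCochain X n →+ HomCochain X n
  | 0 => AddMonoidHom.id _
  | _ + 1 =>
    { toFun := fun f y => pullback σ (f (σ y))
      map_zero' := ext fun _ => map_zero (pullback σ)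
      map_add' := fun _ _ => ext fun _ => map_add (pullback σ) _ _ }

lemma pullback_apply (σ : X → X) (f : HomCochain X (n + 1)) (y : X) :
    pullback σ f y = pullback σ (f (σ y)) := rfl

lemma pullback_pullback (σ σ' : X → X) : ∀ {n : ℕ} (f : HomCochain X n),
    pullback σ (pullback σ' f) = pullback (σ' ∘ σ) f
  | 0, _ => rfl
  | _ + 1, _ => ext fun _ => pullback_pullback σ σ' _

lemma pullback_id : ∀ {n : ℕ} (f : HomCochain X n), pullback id f = f
  | 0, _ => rfl
  | _ + 1, _ => ext fun _ => pullback_id _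

lemma pullback_d (σ : X → X) : ∀ {n : ℕ} (f : HomCochain X n), pullback σ (d f) = d (pullback σ f)
  | 0, _ => rfl
  | _ + 1, f => by
    ext y : 1
    rw [pullback_apply, d_apply, d_apply, map_sub, pullback_d σ (f (σ y)), pullback_apply]

end Basic

section Group

variable {G : Type} [Group G] {n j : ℕ} {K K' : Subgroup G}

/-- The right action of `g : G` on cochains on `G` by left translation of all arguments. -/
def translate (g : G) : HomCochain G n →+ HomCochain G n := pullback (g * ·)

lemma translate_apply (g : G) (f : HomCochain G (n + 1)) (y : G) :
    translate g f y = translate g (f (g * y)) := rfl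

lemma translate_translate (g h : G) (f : HomCochain G n) :
    translate g (translate h f) = translate (h * g) f :=
  (pullback_pullback _ _ f).trans <|
    congrArg (pullback · f) <| funext fun _ => (mul_assoc _ _ _).symm

lemma translate_one (f : HomCochain G n) : translate 1 f = f :=
  (congrArg (pullback · f) <| funext one_mul).trans (pullback_id f)

lemma translate_d (g : G) (f : HomCochain G n) : translate g (d f) = d (translate g f) :=
  pullback_d _ f

lemma translate_translate_inv (g : G) (f : HomCochain G n) : translate g (translate g⁻¹ f) = f := by
  rw [translate_translate, inv_mul_cancel, translate_one]

lemma translate_inv_translate (g : G) (f : HomCochain G n) : translate g⁻¹ (translate g f) = f := by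
  rw [translate_translate, mul_inv_cancel, translate_one]

/-- The group elements that fix the cochain `f`. -/
def stabilizer (f : HomCochain G n) : Subgroup G where
  carrier := {g | translate g f = f}
  one_mem' := translate_one f
  mul_mem' {g h} (hg : _ = _) (hh : _ = _) := show _ = _ by rw [← translate_translate, hg, hh]
  inv_mem' {g} (hg : _ = _) := show _ = _ by
    conv_lhs => rw [← hg, translate_inv_translate]

/-- The `K`-invariant cochains on `G`; as a complex they compute the cohomology of `K`. -/
def invariants (K : Subgroup G) (n : ℕ) : AddSubgroup (HomCochain G n) where
  carrier := {f | ∀ g ∈ K, translate g f = f}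
  zero_mem' _ _ := map_zero _
  add_mem' hf hg a ha := by rw [map_add, hf a ha, hg a ha]
  neg_mem' hf a ha := by rw [map_neg, hf a ha]

lemma mem_invariants_bot (f : HomCochain G n) : f ∈ invariants ⊥ n := fun g hg => by
  rw [Subgroup.mem_bot.1 hg, translate_one]

lemma invariants_anti (h : K ≤ K') {f : HomCochain G n} (hf : f ∈ invariants K' n) :
    f ∈ invariants K n := fun g hg => hf g (h hg)

lemma mem_invariants_sup_zpowers {f : HomCochain G n} (hK : f ∈ invariants K n) {g : G}
    (hg : translate g f = f) : f ∈ invariants (K ⊔ Subgroup.zpowers g) n :=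
  show _ ≤ stabilizer f from sup_le hK (Subgroup.zpowers_le.2 hg)

lemma d_mem_invariants {f : HomCochain G n} (hf : f ∈ invariants K n) :
    d f ∈ invariants K (n + 1) := fun g hg => by rw [translate_d, hf g hg]

lemma translate_mem_invariants {f : HomCochain G n} (hf : f ∈ invariants K n) {t : G}
    (ht : t ∈ Subgroup.normalizer (K : Set G)) : translate t f ∈ invariants K n := fun g hg => by
  have hconj := hf _ ((Subgroup.mem_normalizer_iff.1 ht g).1 hg)
  conv_rhs => rw [← hconj, translate_translate, inv_mul_cancel_right]
  exact translate_translate g t f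

/-- The coboundaries of degree `j` in the complex of `K`-invariant cochains. -/
def coboundaries (K : Subgroup G) : ∀ j, AddSubgroup (HomCochain G (j + 1))
  | 0 => ⊥
  | j + 1 => (invariants K (j + 1)).map d

lemma coboundaries_anti (h : K ≤ K') : ∀ {j : ℕ} {f : HomCochain G (j + 1)},
    f ∈ coboundaries K' j → f ∈ coboundaries K j
  | 0, _, hf => hf
  | _ + 1, _, ⟨w, hw, e⟩ => ⟨w, invariants_anti h hw, e⟩

lemma d_eq_zero_of_mem_coboundaries : ∀ {j : ℕ} {f : HomCochain G (j + 1)},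
    f ∈ coboundaries K j → d f = 0
  | 0, _, h => by rw [AddSubgroup.mem_bot.1 h, map_zero]
  | _ + 1, _, ⟨_, _, e⟩ => e ▸ d_d _

lemma mem_invariants_of_mem_coboundaries : ∀ {j : ℕ} {f : HomCochain G (j + 1)},
    f ∈ coboundaries K j → f ∈ invariants K (j + 1)
  | 0, _, h => by rw [AddSubgroup.mem_bot.1 h]; exact zero_mem _
  | _ + 1, _, ⟨_, hw, e⟩ => e ▸ d_mem_invariants hw

lemma translate_mem_coboundaries {t : G} (ht : t ∈ Subgroup.normalizer (K : Set G)) :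
    ∀ {j : ℕ} {f : HomCochain G (j + 1)}, f ∈ coboundaries K j → translate t f ∈ coboundaries K j
  | 0, _, h => by rw [AddSubgroup.mem_bot.1 h, map_zero]; exact zero_mem _
  | _ + 1, _, ⟨w, hw, e⟩ =>
    e ▸ ⟨translate t w, translate_mem_invariants hw ht, (translate_d t w).symm⟩

/-! ### Extending a subgroup by an infinite cyclic group -/

section InfiniteCyclic

variable {t : G} {ξ : G → ℤ}

lemma exists_sequence_translate_eq_add (ht : t ∈ Subgroup.normalizer (K : Set G))
    {f : HomCochain G n} (hf : f ∈ invariants K n) :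
    ∃ S : ℤ → HomCochain G n, (∀ m, S m ∈ invariants K n) ∧
      ∀ m, translate t (S (m + 1)) = S m + f := by
  let T : Equiv.Perm (HomCochain G n) :=
    { toFun := fun c => translate t⁻¹ (c + f)
      invFun := fun c => translate t c - f
      left_inv := fun c => by simp only [translate_translate_inv, add_sub_cancel_right]
      right_inv := fun c => by simp only [sub_add_cancel, translate_inv_translate] }
  let S : ℤ → HomCochain G n := fun m => (T ^ m) 0
  have step (m : ℤ) : translate t (S (m + 1)) = S m + f := by
    have hT : S (m + 1) = T (S m) := by
      simp only [S, add_comm m 1, _root_.zpow_add, zpow_one, Equiv.Perm.mul_apply]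
    rw [hT]
    exact translate_translate_inv _ _
  refine ⟨S, fun m => ?_, step⟩
  induction m using Int.induction_on with
  | zero => exact zero_mem _
  | succ m ih =>
    rw [← translate_inv_translate t (S _), step]
    exact translate_mem_invariants (add_mem ih hf) (inv_mem ht)
  | pred m ih =>
    rw [eq_sub_of_add_eq (step (-m - 1)).symm, sub_add_cancel]
    exact sub_mem (translate_mem_invariants ih ht) hf

lemma exists_translate_sub_eq (ht : t ∈ Subgroup.normalizer (K : Set G))
    (hξK : ∀ g ∈ K, ∀ y, ξ (g * y) = ξ y) (hξt : ∀ y, ξ (t * y) = ξ y + 1)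
    {f : HomCochain G (n + 1)} (hf : f ∈ invariants K (n + 1)) :
    ∃ g ∈ invariants K (n + 1), translate t g - g = f := by
  obtain ⟨S, hS, step⟩ := exists_sequence_translate_eq_add ht hf
  refine ⟨diag fun y => S (ξ y), fun a ha => ?_, ?_⟩
  · ext y : 1
    rw [translate_apply, diag_apply, hξK a ha, ← translate_apply, hS _ a ha, diag_apply]
  · ext y : 1
    rw [sub_apply, translate_apply, diag_apply, diag_apply, hξt, ← translate_apply, step,
      add_apply, add_sub_cancel_left]

lemma exists_coboundary_translate_sub_eq (ht : t ∈ Subgroup.normalizer (K : Set G))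
    (hξK : ∀ g ∈ K, ∀ y, ξ (g * y) = ξ y) (hξt : ∀ y, ξ (t * y) = ξ y + 1) :
    ∀ {j : ℕ} {f : HomCochain G (j + 1)}, f ∈ coboundaries K j →
      ∃ g ∈ coboundaries K j, translate t g - g = f
  | 0, _, h => ⟨0, zero_mem _, by rw [AddSubgroup.mem_bot.1 h, map_zero, sub_zero]⟩
  | _ + 1, _, ⟨_, hw, e⟩ => by
    obtain ⟨g, hg, rfl⟩ := exists_translate_sub_eq ht hξK hξt hw
    exact ⟨d g, ⟨g, hg, rfl⟩, by rw [← e, translate_d, ← map_sub]⟩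

end InfiniteCyclic

/-! ### Extending a subgroup by a finite cyclic group -/

section FiniteCyclic

variable {q : ℕ} {π : G →* Multiplicative (ZMod q)} {r : G}

/-- The norm `∑_{m < q} r ^ m` of the cyclic group generated by `r`, acting on cochains. -/
def norm (q : ℕ) (r : G) : HomCochain G n →+ HomCochain G n :=
  ∑ m ∈ Finset.range q, translate (r ^ m)

lemma norm_apply (q : ℕ) (r : G) (f : HomCochain G n) :
    norm q r f = ∑ m ∈ Finset.range q, translate (r ^ m) f :=
  AddMonoidHom.finsetSum_apply _ _ _

lemma norm_d (q : ℕ) (r : G) (f : HomCochain G n) : norm q r (d f) = d (norm q r f) := by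
  simp only [norm_apply, translate_d, map_sum]

lemma norm_zero (r : G) (f : HomCochain G n) : norm 0 r f = 0 := by
  rw [norm_apply, Finset.sum_range_zero]

lemma norm_succ (k : ℕ) (r : G) (f : HomCochain G n) :
    norm (k + 1) r f = norm k r f + translate (r ^ k) f := by
  rw [norm_apply, norm_apply, Finset.sum_range_succ]

lemma norm_add (k l : ℕ) (r : G) (f : HomCochain G n) :
    norm (k + l) r f = norm k r f + norm l r (translate (r ^ k) f) := by
  induction l with
  | zero => rw [add_zero, norm_zero, add_zero]
  | succ l ih => rw [← add_assoc, norm_succ, norm_succ, ih, translate_translate, pow_add, add_assoc]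

lemma norm_mul (k l : ℕ) (r : G) (f : HomCochain G n) :
    norm (k * l) r f = norm k r (norm l (r ^ k) f) := by
  induction l with
  | zero => rw [mul_zero, norm_zero, norm_zero, map_zero]
  | succ l ih => rw [Nat.mul_succ, norm_add, ih, norm_succ, map_add, pow_mul]

lemma norm_translate (k : ℕ) (r : G) (f : HomCochain G n) :
    norm k r (translate r f) = translate r (norm k r f) := by
  simp only [norm_apply, map_sum, translate_translate, ← pow_succ, ← pow_succ']

lemma translate_norm_sub_norm (k : ℕ) (r : G) (f : HomCochain G n) :
    translate r (norm k r f) - norm k r f = translate (r ^ k) f - f := by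
  induction k with
  | zero => simp only [norm_zero, map_zero, pow_zero, translate_one, sub_self]
  | succ k ih =>
    rw [norm_succ, map_add, add_sub_add_comm, ih, translate_translate, ← pow_succ]
    abel

lemma translate_norm (hr : r ^ q = 1) (f : HomCochain G n) :
    translate r (norm q r f) = norm q r f := by
  rw [← sub_eq_zero, translate_norm_sub_norm, hr, translate_one, sub_self]

lemma norm_pow_sub_nsmul (k l : ℕ) (r : G) (f : HomCochain G n) :
    norm l (r ^ k) f - l • f = translate r (∑ m ∈ Finset.range l, norm (k * m) r f) -
      ∑ m ∈ Finset.range l, norm (k * m) r f := by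
  simp only [map_sum, ← Finset.sum_sub_distrib, translate_norm_sub_norm, pow_mul]
  rw [Finset.sum_sub_distrib, Finset.sum_const, Finset.card_range, norm_apply]

lemma translate_mem_invariants_ker {f : HomCochain G n} (hf : f ∈ invariants π.ker n) (t : G) :
    translate t f ∈ invariants π.ker n :=
  translate_mem_invariants hf <| by rw [Subgroup.normalizer_eq_top]; trivial

lemma translate_mem_coboundaries_ker {f : HomCochain G (j + 1)} (hf : f ∈ coboundaries π.ker j)
    (t : G) : translate t f ∈ coboundaries π.ker j :=
  translate_mem_coboundaries (by rw [Subgroup.normalizer_eq_top]; trivial) hf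

lemma norm_mem_invariants_ker {f : HomCochain G n} (hf : f ∈ invariants π.ker n) (q : ℕ) (r : G) :
    norm q r f ∈ invariants π.ker n := by
  rw [norm_apply]
  exact sum_mem fun m _ => translate_mem_invariants_ker hf _

lemma norm_mem_coboundaries_ker {f : HomCochain G (j + 1)} (hf : f ∈ coboundaries π.ker j)
    (k : ℕ) (r : G) : norm k r f ∈ coboundaries π.ker j := by
  rw [norm_apply]
  exact sum_mem fun m _ => translate_mem_coboundaries_ker hf _

lemma norm_sub_nsmul_mem_coboundaries_ker {f : HomCochain G (j + 1)}
    (hf : translate r f - f ∈ coboundaries π.ker j) (k : ℕ) :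
    norm k r f - k • f ∈ coboundaries π.ker j := by
  have h := norm_pow_sub_nsmul 1 k r f
  rw [pow_one] at h
  rw [h, map_sum, ← Finset.sum_sub_distrib]
  refine sum_mem fun m _ => ?_
  rw [← norm_translate, ← map_sub]
  exact norm_mem_coboundaries_ker hf _ r

lemma mem_invariants_top_of_ker (hπ : π r = Multiplicative.ofAdd 1) {f : HomCochain G n}
    (hf : f ∈ invariants π.ker n) (hrf : translate r f = f) : f ∈ invariants ⊤ n := by
  refine invariants_anti (fun g _ => ?_) (mem_invariants_sup_zpowers hf hrf)
  obtain ⟨m, hm⟩ := ZMod.intCast_surjective (π g).toAdd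
  rw [← inv_mul_cancel_right g (r ^ m)]
  refine Subgroup.mul_mem_sup ?_ (Subgroup.zpow_mem_zpowers r m)
  rw [MonoidHom.mem_ker, map_mul, map_inv, map_zpow, hπ, ← ofAdd_zsmul, zsmul_one, hm,
    ofAdd_toAdd, mul_inv_cancel]

lemma norm_mem_invariants_top (hπ : π r = Multiplicative.ofAdd 1) (hr : r ^ q = 1)
    {f : HomCochain G n} (hf : f ∈ invariants π.ker n) : norm q r f ∈ invariants ⊤ n :=
  mem_invariants_top_of_ker hπ (norm_mem_invariants_ker hf q r) (translate_norm hr f)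

lemma toAdd_map_pow_mul (hπ : π r = Multiplicative.ofAdd 1) (m : ℕ) (y : G) :
    (π (r ^ m * y)).toAdd = m + (π y).toAdd := by
  rw [map_mul, map_pow, hπ, toAdd_mul, toAdd_pow, toAdd_ofAdd, nsmul_one]

lemma exists_norm_eq [NeZero q] (hπ : π r = Multiplicative.ofAdd 1) {y : HomCochain G (n + 1)}
    (hy : y ∈ invariants ⊤ (n + 1)) : ∃ v ∈ invariants π.ker (n + 1), norm q r v = y := by
  refine ⟨diag fun x => if (π x).toAdd = 0 then y else 0, fun a ha => ?_, ?_⟩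
  · ext x : 1
    have hx : π (a * x) = π x := by rw [map_mul, MonoidHom.mem_ker.1 ha, one_mul]
    rw [translate_apply, diag_apply, diag_apply, hx]
    split_ifs
    · rw [← translate_apply, hy a trivial]
    · exact map_zero _
  · ext x : 1
    have summand (m : ℕ) : translate (r ^ m) (diag fun x => if (π x).toAdd = 0 then y else 0) x =
        if m = -(π x).toAdd then y x else 0 := by
      rw [translate_apply, diag_apply, toAdd_map_pow_mul hπ]
      simp only [add_eq_zero_iff_eq_neg]
      split_ifs
      · rw [← translate_apply, hy _ trivial]
      · exact map_zero _
    rw [norm_apply, sum_apply, Finset.sum_congr rfl fun m _ => summand m,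
      Finset.sum_eq_single_of_mem (-(π x).toAdd).val (Finset.mem_range.2 (ZMod.val_lt _)),
      if_pos (ZMod.natCast_zmod_val _)]
    intro m hm hne
    refine if_neg fun h => hne ?_
    rw [← h, ZMod.val_cast_of_lt (Finset.mem_range.1 hm)]

lemma exists_translate_sub_eq_of_norm_eq_zero [NeZero q] (hπ : π r = Multiplicative.ofAdd 1)
    {f : HomCochain G (n + 1)} (hf : f ∈ invariants π.ker (n + 1)) (h0 : norm q r f = 0) :
    ∃ g ∈ invariants π.ker (n + 1), translate r g - g = f := by
  let S (m : ℕ) : HomCochain G (n + 1) := -∑ i ∈ Finset.range (q - m), translate (r ^ i) f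
  have step {m : ℕ} (hm : m < q) : translate r (S (m + 1)) = S m + f := by
    have hq : q - m = (q - (m + 1)) + 1 := by lia
    simp only [S, hq, Finset.sum_range_succ', pow_zero, translate_one, map_neg, map_sum,
      translate_translate, ← pow_succ]
    abel
  have hS (m : ℕ) : S m ∈ invariants π.ker (n + 1) :=
    neg_mem (sum_mem fun i _ => translate_mem_invariants_ker hf _)
  have wrap : S q = S 0 := by
    rw [norm_apply] at h0
    simp only [S, tsub_self, Finset.range_zero, Finset.sum_empty, tsub_zero, h0]
  have periodic (p : ZMod q) : S (1 + p).val = S (p.val + 1) := by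
    have hval : (1 + p).val = (p.val + 1) % q := by
      rw [← ZMod.val_natCast, Nat.cast_succ, ZMod.natCast_zmod_val, add_comm]
    rcases (Nat.add_one_le_iff.2 (ZMod.val_lt p)).eq_or_lt with hp | hp
    · rw [hval, hp, Nat.mod_self, wrap]
    · rw [hval, Nat.mod_eq_of_lt hp]
  refine ⟨diag fun x => S (π x).toAdd.val, fun a ha => ?_, ?_⟩
  · ext x : 1
    have hx : π (a * x) = π x := by rw [map_mul, MonoidHom.mem_ker.1 ha, one_mul]
    rw [translate_apply, diag_apply, diag_apply, hx, ← translate_apply, hS _ a ha]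
  · ext x : 1
    have hx := toAdd_map_pow_mul hπ 1 x
    rw [pow_one, Nat.cast_one] at hx
    rw [sub_apply, translate_apply, diag_apply, diag_apply, hx, ← translate_apply, periodic,
      step (ZMod.val_lt _), add_apply, add_sub_cancel_left]

/-- The zig-zag `x = d u`, `(r - 1) u = d v`, `y = N v` of `ker π`-invariant cochains: it says that
the class of `x` is the cup product of the class of `y` with the generator of `H²(ℤ/q, ℤ)` pulled
back along `π`. -/
def PeriodicityRel (π : G →* Multiplicative (ZMod q)) (r : G) (x : HomCochain G (j + 3))
    (y : HomCochain G (j + 1)) : Prop :=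
  ∃ u ∈ invariants π.ker (j + 2), ∃ v ∈ invariants π.ker (j + 1),
    d u = x ∧ translate r u - u = d v ∧ norm q r v = y

namespace PeriodicityRel

variable {x x' : HomCochain G (j + 3)} {y y' : HomCochain G (j + 1)}

lemma add (h : PeriodicityRel π r x y) (h' : PeriodicityRel π r x' y') :
    PeriodicityRel π r (x + x') (y + y') := by
  obtain ⟨u, hu, v, hv, rfl, huv, rfl⟩ := h
  obtain ⟨u', hu', v', hv', rfl, huv', rfl⟩ := h'
  refine ⟨u + u', add_mem hu hu', v + v', add_mem hv hv', map_add _ _ _, ?_, map_add _ _ _⟩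
  rw [map_add, map_add, ← huv, ← huv', add_sub_add_comm]

lemma zsmul (h : PeriodicityRel π r x y) (m : ℤ) : PeriodicityRel π r (m • x) (m • y) := by
  obtain ⟨u, hu, v, hv, rfl, huv, rfl⟩ := h
  refine ⟨m • u, zsmul_mem hu m, m • v, zsmul_mem hv m, map_zsmul _ _ _, ?_, map_zsmul _ _ _⟩
  rw [map_zsmul, map_zsmul, ← huv, smul_sub]

lemma zero : PeriodicityRel π r (0 : HomCochain G (j + 3)) 0 :=
  ⟨0, zero_mem _, 0, zero_mem _, map_zero _, by simp only [map_zero, sub_zero], map_zero _⟩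

lemma sum {ι : Type*} {s : Finset ι} {x : ι → HomCochain G (j + 3)} {y : ι → HomCochain G (j + 1)}
    (h : ∀ i ∈ s, PeriodicityRel π r (x i) (y i)) :
    PeriodicityRel π r (∑ i ∈ s, x i) (∑ i ∈ s, y i) := by
  induction s using Finset.cons_induction with
  | empty => exact zero
  | cons i s hi ih =>
    rw [Finset.sum_cons, Finset.sum_cons]
    exact (h i (Finset.mem_cons_self i s)).add (ih fun k hk => h k (Finset.mem_cons_of_mem hk))

lemma mem_coboundaries [NeZero q] (hπ : π r = Multiplicative.ofAdd 1)
    (h : PeriodicityRel π r x y) (hy : y ∈ coboundaries ⊤ j) : x ∈ coboundaries ⊤ (j + 2) := by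
  obtain ⟨u, hu, v, hv, rfl, huv, hvy⟩ := h
  obtain ⟨v', hv', hdv', hnorm⟩ :
      ∃ v' ∈ invariants π.ker (j + 1), d v' = d v ∧ norm q r v' = 0 := by
    cases j with
    | zero => exact ⟨v, hv, rfl, hvy.trans hy⟩
    | succ j =>
      obtain ⟨w, hw, rfl⟩ := hy
      obtain ⟨w', hw', rfl⟩ := exists_norm_eq hπ hw
      refine ⟨v - d w', sub_mem hv (d_mem_invariants hw'), ?_, ?_⟩
      · rw [map_sub, d_d, sub_zero]
      · rw [map_sub, hvy, norm_d, sub_self]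
  obtain ⟨g, hg, rfl⟩ := exists_translate_sub_eq_of_norm_eq_zero hπ hv' hnorm
  refine ⟨u - d g, mem_invariants_top_of_ker hπ (sub_mem hu (d_mem_invariants hg)) ?_, ?_⟩
  · rw [← hdv', map_sub, ← translate_d] at huv
    rw [map_sub, sub_eq_iff_eq_add.1 huv]
    abel
  · rw [map_sub, d_d, sub_zero]

lemma exists_of_cocycle [NeZero q] (hπ : π r = Multiplicative.ofAdd 1)
    (hy : y ∈ invariants ⊤ (j + 1)) (hdy : d y = 0) :
    ∃ x ∈ invariants ⊤ (j + 3), d x = 0 ∧ PeriodicityRel π r x y := by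
  obtain ⟨v, hv, rfl⟩ := exists_norm_eq hπ hy
  rw [← norm_d] at hdy
  obtain ⟨u, hu, huv⟩ := exists_translate_sub_eq_of_norm_eq_zero hπ (d_mem_invariants hv) hdy
  refine ⟨d u, mem_invariants_top_of_ker hπ (d_mem_invariants hu) ?_, d_d _,
    u, hu, v, hv, rfl, huv, rfl⟩
  rw [translate_d, ← sub_eq_zero, ← map_sub, huv, d_d]

lemma right_mem_invariants (hπ : π r = Multiplicative.ofAdd 1) (hr : r ^ q = 1)
    (h : PeriodicityRel π r x y) : y ∈ invariants ⊤ (j + 1) := by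
  obtain ⟨_, _, _, hv, -, -, rfl⟩ := h
  exact norm_mem_invariants_top hπ hr hv

lemma d_right (hr : r ^ q = 1) (h : PeriodicityRel π r x y) : d y = 0 := by
  obtain ⟨_, _, _, _, -, huv, rfl⟩ := h
  rw [← norm_d, ← huv, map_sub, norm_translate, translate_norm hr, sub_self]

/-- Dimension shifting for a class which dies on `ker π`: its transgression lives in `H¹(ℤ/q, -)`
of the classes on `ker π`, which the norm condition makes `l`-torsion. -/
lemma exists_zsmul_of_norm_condition {k l : ℕ} (hq : q = k * l) (hr : r ^ q = 1)
    (hx : x ∈ invariants ⊤ (j + 3)) (hxker : x ∈ coboundaries π.ker (j + 2))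
    (htor : ∀ z ∈ invariants π.ker (j + 2), (k : ℤ) • z ∈ coboundaries π.ker (j + 1) →
      z ∈ coboundaries π.ker (j + 1))
    (hnorm : ∀ z ∈ invariants π.ker (j + 2), d z = 0 →
      translate r (norm l (r ^ k) z) - norm l (r ^ k) z ∈ coboundaries π.ker (j + 1)) :
    ∃ y, PeriodicityRel π r ((l : ℤ) • x) y := by
  obtain ⟨u, hu, rfl⟩ := hxker
  set z := translate r u - u with hz
  have hzker : z ∈ invariants π.ker (j + 2) := sub_mem (translate_mem_invariants_ker hu r) hu
  have hdz : d z = 0 := by rw [map_sub, ← translate_d, hx r trivial, sub_self]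
  have hNz : norm k r (norm l (r ^ k) z) = 0 := by
    rw [← norm_mul, ← hq, map_sub, norm_translate, translate_norm hr, sub_self]
  have hzcob : norm l (r ^ k) z ∈ coboundaries π.ker (j + 1) := by
    refine htor _ (norm_mem_invariants_ker hzker l _) ?_
    have h := norm_sub_nsmul_mem_coboundaries_ker (hnorm z hzker hdz) k
    rwa [hNz, zero_sub, neg_mem_iff, ← natCast_zsmul] at h
  obtain ⟨v, hv, hvz⟩ := hzcob
  set s := ∑ m ∈ Finset.range l, norm (k * m) r z with hs
  have hds : d s = 0 := by
    simp only [hs, map_sum, ← norm_d, hdz, map_zero, Finset.sum_const_zero]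
  refine ⟨norm q r v, (l : ℤ) • u + s,
    add_mem (zsmul_mem hu _) (sum_mem fun m _ => norm_mem_invariants_ker hzker _ _), v, hv, ?_, ?_,
    rfl⟩
  · rw [map_add, hds, add_zero, map_zsmul]
  · rw [hvz, map_add, add_sub_add_comm, ← norm_pow_sub_nsmul k l r z, map_zsmul, ← smul_sub, ← hz,
      natCast_zsmul, add_sub_cancel]

end PeriodicityRel

end FiniteCyclic

end Group

end HomCochain

/-! ### Coordinates on `ℤⁿ ⋊ ℤ/q` -/

section Crys

variable {n q : ℕ} [NeZero q] {M : Matrix (Fin n) (Fin n) ℤ} {hq : M ^ q = 1}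

/-- The element of `ℤⁿ ⋊ ℤ/q` given by a lattice vector. -/
def translation (a : Fin n → ℤ) : Crys q M hq := SemidirectProduct.inl (Multiplicative.ofAdd a)

/-- The chosen generator of `ℤ/q`, as an element of `ℤⁿ ⋊ ℤ/q`. -/
def rotation : Crys q M hq := SemidirectProduct.inr (Multiplicative.ofAdd 1)

/-- The lattice component of an element of `ℤⁿ ⋊ ℤ/q`. -/
def coord (y : Crys q M hq) : Fin n → ℤ := Multiplicative.toAdd y.left

/-- The projection `ℤⁿ ⋊ ℤ/q → ℤ/q`, whose kernel is the lattice. -/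
def holonomy : Crys q M hq →* Multiplicative (ZMod q) := SemidirectProduct.rightHom

lemma translation_add (a b : Fin n → ℤ) :
    (translation (a + b) : Crys q M hq) = translation a * translation b :=
  map_mul SemidirectProduct.inl _ _

lemma translation_zero : (translation 0 : Crys q M hq) = 1 := map_one SemidirectProduct.inl

lemma translation_neg (a : Fin n → ℤ) : (translation (-a) : Crys q M hq) = (translation a)⁻¹ :=
  map_inv SemidirectProduct.inl _

lemma translation_zsmul (m : ℤ) (a : Fin n → ℤ) :
    (translation (m • a) : Crys q M hq) = translation a ^ m :=
  map_zpow SemidirectProduct.inl _ _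

lemma translation_mul_comm (a b : Fin n → ℤ) :
    (translation a * translation b : Crys q M hq) = translation b * translation a := by
  rw [← translation_add, add_comm, translation_add]

lemma coord_translation_mul (a : Fin n → ℤ) (y : Crys q M hq) :
    coord (translation a * y) = a + coord y := by
  simp [coord, translation]

lemma coord_translation (a : Fin n → ℤ) : coord (translation a : Crys q M hq) = a := rfl

lemma coord_one : coord (1 : Crys q M hq) = 0 := rfl

lemma zmodHom_ofAdd_one {G : Type*} [Group G] {m : ℕ} [NeZero m] {α : G} (hα : α ^ m = 1) :
    zmodHom m α hα (Multiplicative.ofAdd 1) = α := by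
  change α ^ (1 : ZMod m).val = α
  rw [ZMod.val_one_eq_one_mod, ← pow_eq_pow_mod _ hα, pow_one]

lemma matAction_ofAdd_one (hq : M ^ q = 1) (v : Lat n) :
    matAction q M hq (Multiplicative.ofAdd 1) v = Multiplicative.ofAdd (M *ᵥ v.toAdd) :=
  DFunLike.congr_fun (zmodHom_ofAdd_one _) v

lemma coord_rotation_mul (y : Crys q M hq) : coord (rotation * y) = M *ᵥ coord y := by
  have hleft : (rotation * y).left = matAction q M hq (Multiplicative.ofAdd 1) y.left := by
    simp [rotation]
  rw [coord, hleft, matAction_ofAdd_one]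
  rfl

lemma coord_rotation_pow_mul (m : ℕ) (y : Crys q M hq) :
    coord (rotation ^ m * y) = (M ^ m) *ᵥ coord y := by
  induction m with
  | zero => simp
  | succ m ih => rw [pow_succ', mul_assoc, coord_rotation_mul, ih, pow_succ', mulVec_mulVec]

lemma rotation_pow_card : (rotation : Crys q M hq) ^ q = 1 := by
  rw [rotation, ← map_pow, ← ofAdd_nsmul, nsmul_one, ZMod.natCast_self, ofAdd_zero, map_one]

lemma holonomy_rotation : holonomy (rotation : Crys q M hq) = Multiplicative.ofAdd 1 :=
  SemidirectProduct.rightHom_inr _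

lemma translation_mem_ker_holonomy (a : Fin n → ℤ) :
    (translation a : Crys q M hq) ∈ (holonomy : Crys q M hq →* _).ker :=
  SemidirectProduct.rightHom_inl _

lemma exists_translation_eq_of_mem_ker_holonomy {y : Crys q M hq}
    (hy : y ∈ (holonomy : Crys q M hq →* _).ker) : ∃ a, translation a = y := by
  rw [holonomy, ← SemidirectProduct.range_inl_eq_ker_rightHom] at hy
  exact hy

/-- The translations by vectors supported on the first `k` coordinates. -/
def partialLattice (hq : M ^ q = 1) (k : ℕ) : Subgroup (Crys q M hq) where
  carrier := {y | ∃ a : Fin n → ℤ, (∀ i : Fin n, k ≤ i → a i = 0) ∧ translation a = y}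
  one_mem' := ⟨0, fun _ _ => rfl, translation_zero⟩
  mul_mem' := by
    rintro _ _ ⟨a, ha, rfl⟩ ⟨b, hb, rfl⟩
    exact ⟨a + b, fun i hi => by rw [Pi.add_apply, ha i hi, hb i hi, add_zero], translation_add a b⟩
  inv_mem' := by
    rintro _ ⟨a, ha, rfl⟩
    exact ⟨-a, fun i hi => by rw [Pi.neg_apply, ha i hi, neg_zero], translation_neg a⟩

lemma partialLattice_zero : partialLattice hq 0 = ⊥ := by
  refine eq_bot_iff.2 ?_
  rintro _ ⟨a, ha, rfl⟩
  rw [funext fun i => ha i (Nat.zero_le _), Subgroup.mem_bot]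
  exact translation_zero

lemma partialLattice_top : partialLattice hq n = (holonomy : Crys q M hq →* _).ker := by
  refine le_antisymm ?_ fun y hy => ?_
  · rintro _ ⟨a, -, rfl⟩
    exact translation_mem_ker_holonomy a
  · obtain ⟨a, rfl⟩ := exists_translation_eq_of_mem_ker_holonomy hy
    exact ⟨a, fun i hi => absurd i.isLt hi.not_gt, rfl⟩

lemma partialLattice_le_succ (k : ℕ) : partialLattice hq k ≤ partialLattice hq (k + 1) := by
  rintro _ ⟨a, ha, rfl⟩
  exact ⟨a, fun i hi => ha i (Nat.le_of_succ_le hi), rfl⟩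

lemma translation_single_mem (i : Fin n) :
    translation (Pi.single i 1) ∈ partialLattice hq (i + 1) :=
  ⟨_, fun l hl => Pi.single_eq_of_ne (fun h => by subst h; exact absurd hl (by lia)) _, rfl⟩

lemma partialLattice_succ_le (i : Fin n) : partialLattice hq (i + 1) ≤
    partialLattice hq i ⊔ Subgroup.zpowers (translation (Pi.single i 1)) := by
  rintro _ ⟨a, ha, rfl⟩
  rw [← sub_add_cancel a (a i • Pi.single i 1), translation_add, translation_zsmul]
  refine Subgroup.mul_mem_sup ⟨_, fun l hl => ?_, rfl⟩ (Subgroup.zpow_mem_zpowers _ _)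
  rcases hl.eq_or_lt with h | h
  · obtain rfl : i = l := Fin.ext h
    simp
  · have hli : l ≠ i := fun hli => by subst hli; exact lt_irrefl _ h
    simp [ha l h, hli]

lemma translation_mem_normalizer (a : Fin n → ℤ) (k : ℕ) :
    translation a ∈ Subgroup.normalizer (partialLattice hq k : Set (Crys q M hq)) := by
  refine Subgroup.mem_normalizer_iff.2 fun y => ?_
  suffices conj : ∀ (a : Fin n → ℤ) (y : Crys q M hq), y ∈ partialLattice hq k →
      translation a * y * (translation a)⁻¹ ∈ partialLattice hq k by
    refine ⟨conj a y, fun h => ?_⟩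
    simpa [translation_neg, mul_assoc] using conj (-a) _ h
  rintro a _ ⟨b, hb, rfl⟩
  rw [translation_mul_comm, mul_inv_cancel_right]
  exact ⟨b, hb, rfl⟩

lemma coord_mul_of_mem_partialLattice (i : Fin n) {g : Crys q M hq}
    (hg : g ∈ partialLattice hq i) (y : Crys q M hq) : coord (g * y) i = coord y i := by
  obtain ⟨a, ha, rfl⟩ := hg
  rw [coord_translation_mul, Pi.add_apply, ha i le_rfl, zero_add]

lemma coord_translation_single_mul (i : Fin n) (y : Crys q M hq) :
    coord (translation (Pi.single i 1) * y) i = coord y i + 1 := by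
  rw [coord_translation_mul, Pi.add_apply, Pi.single_eq_same, add_comm]

namespace HomCochain

/-! ### Cochains depending on coordinate differences -/

/-- The cochain `(y₀, …, y_j) ↦ F (ξ₁ - ξ₀, …, ξ_j - ξ_{j-1})`, where `ξᵢ` is the lattice component
of `yᵢ`. -/
def diffCochain : ∀ {j : ℕ}, ((Fin j → Fin n → ℤ) → ℤ) →+ HomCochain (Crys q M hq) (j + 1)
  | 0 => { toFun := fun F _ => F ![], map_zero' := rfl, map_add' := fun _ _ => rfl }
  | _ + 1 =>
    { toFun := fun F y₀ y₁ => diffCochain (fun v => F (vecCons (coord y₁ - coord y₀) v)) y₁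
      map_zero' := ext fun _ => ext fun y₁ =>
        congrFun (map_zero diffCochain) y₁
      map_add' := fun _ _ => ext fun _ => ext fun y₁ =>
        congrFun (map_add diffCochain _ _) y₁ }

lemma diffCochain_apply {j : ℕ} (F : (Fin (j + 1) → Fin n → ℤ) → ℤ) (y₀ y₁ : Crys q M hq) :
    diffCochain F y₀ y₁ = diffCochain (fun v => F (vecCons (coord y₁ - coord y₀) v)) y₁ := rfl

lemma translate_translation_diffCochain (a : Fin n → ℤ) :
    ∀ {j : ℕ} (F : (Fin j → Fin n → ℤ) → ℤ),
      translate (translation a : Crys q M hq) (diffCochain F) = diffCochain F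
  | 0, _ => rfl
  | j + 1, F => by
    ext y₀ y₁ : 2
    rw [translate_apply, translate_apply, diffCochain_apply, coord_translation_mul,
      coord_translation_mul, add_sub_add_left_eq_sub, ← translate_apply,
      translate_translation_diffCochain a, diffCochain_apply]

lemma diffCochain_mem_invariants {j : ℕ} (F : (Fin j → Fin n → ℤ) → ℤ) :
    diffCochain F ∈ invariants (holonomy : Crys q M hq →* _).ker (j + 1) := fun g hg => by
  obtain ⟨a, rfl⟩ := exists_translation_eq_of_mem_ker_holonomy hg
  exact translate_translation_diffCochain a F

lemma translate_rotation_pow_diffCochain (m : ℕ) :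
    ∀ {j : ℕ} (F : (Fin j → Fin n → ℤ) → ℤ),
      translate ((rotation : Crys q M hq) ^ m) (diffCochain F) =
        diffCochain fun v => F fun i => (M ^ m) *ᵥ v i
  | 0, F => ext fun _ => congrArg F (Subsingleton.elim _ _)
  | j + 1, F => by
    ext y₀ y₁ : 2
    rw [translate_apply, translate_apply, diffCochain_apply, coord_rotation_pow_mul,
      coord_rotation_pow_mul, ← mulVec_sub, ← translate_apply,
      translate_rotation_pow_diffCochain m, diffCochain_apply]
    refine congrArg (diffCochain · y₁) (funext fun v => congrArg F (funext fun i => ?_))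
    cases i using Fin.cases <;> rfl

lemma d_diffCochain_one (F : (Fin 1 → Fin n → ℤ) → ℤ) :
    d (diffCochain F : HomCochain (Crys q M hq) 2) =
      diffCochain fun v => F ![v 1] - F ![v 0 + v 1] + F ![v 0] := by
  ext y₀ y₁ y₂ : 3
  change F ![coord y₂ - coord y₁] - (F ![coord y₂ - coord y₀] - F ![coord y₁ - coord y₀]) =
    F ![coord y₂ - coord y₁] - F ![coord y₁ - coord y₀ + (coord y₂ - coord y₁)] +
      F ![coord y₁ - coord y₀]
  rw [add_comm (coord y₁ - coord y₀), sub_add_sub_cancel, sub_add]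

lemma d_diffCochain_two (F : (Fin 2 → Fin n → ℤ) → ℤ) :
    d (diffCochain F : HomCochain (Crys q M hq) 3) =
      diffCochain fun v =>
        F ![v 1, v 2] - F ![v 0 + v 1, v 2] + F ![v 0, v 1 + v 2] - F ![v 0, v 1] := by
  ext y₀ y₁ y₂ y₃ : 4
  change F ![coord y₂ - coord y₁, coord y₃ - coord y₂] -
      (F ![coord y₂ - coord y₀, coord y₃ - coord y₂] -
        (F ![coord y₁ - coord y₀, coord y₃ - coord y₁] -
          F ![coord y₁ - coord y₀, coord y₂ - coord y₁])) =
    F ![coord y₂ - coord y₁, coord y₃ - coord y₂] -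
      F ![coord y₁ - coord y₀ + (coord y₂ - coord y₁), coord y₃ - coord y₂] +
      F ![coord y₁ - coord y₀, coord y₂ - coord y₁ + (coord y₃ - coord y₂)] -
      F ![coord y₁ - coord y₀, coord y₂ - coord y₁]
  rw [add_comm (coord y₁ - coord y₀), sub_add_sub_cancel, add_comm (coord y₂ - coord y₁),
    sub_add_sub_cancel]
  ring

end HomCochain

end Crys

namespace HomCochain

/-! ### Cohomology of the lattice -/

section Form

variable {n q : ℕ} [NeZero q] {M : Matrix (Fin n) (Fin n) ℤ} {hq : M ^ q = 1} {j : ℕ}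

/-- Integral multilinear forms of degree `j` on `ℤⁿ`. -/
abbrev LatticeForm (n j : ℕ) : Type := MultilinearMap ℤ (fun _ : Fin j => Fin n → ℤ) ℤ

/-- The lattice-invariant cocycle of degree `j` defined by a multilinear form: the cup product of
coordinate classes, extended linearly. -/
def form : LatticeForm n j →+ HomCochain (Crys q M hq) (j + 1) where
  toFun B := diffCochain B
  map_zero' := map_zero diffCochain
  map_add' B B' := map_add diffCochain (B : (Fin j → Fin n → ℤ) → ℤ) B'

lemma diffCochain_eq_form {F : (Fin j → Fin n → ℤ) → ℤ} {B : LatticeForm n j}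
    (h : ∀ v, F v = B v) : (diffCochain F : HomCochain (Crys q M hq) (j + 1)) = form B :=
  DFunLike.congr_arg diffCochain (funext h)

lemma form_apply (B : LatticeForm n (j + 1)) (y₀ y₁ : Crys q M hq) :
    form B y₀ y₁ = form (B.curryLeft (coord y₁ - coord y₀)) y₁ := rfl

lemma d_form : ∀ {j : ℕ} (B : LatticeForm n j), d (form B : HomCochain (Crys q M hq) (j + 1)) = 0
  | 0, _ => ext fun _ => sub_self _
  | j + 1, B => by
    suffices h : form B = d (diag fun y : Crys q M hq => form (B.curryLeft (coord y))) by
      rw [h, d_d]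
    ext y₀ y₁ : 2
    rw [d_apply, sub_apply, diag_apply, diag_apply, ← eq_d_apply_of_d_eq_zero (d_form _),
      form_apply, map_sub, map_sub, sub_apply]

lemma translate_translation_form (a : Fin n → ℤ) (B : LatticeForm n j) :
    translate (translation a : Crys q M hq) (form B) = form B :=
  translate_translation_diffCochain a _

lemma form_mem_invariants (B : LatticeForm n j) :
    form B ∈ invariants (holonomy : Crys q M hq →* _).ker (j + 1) :=
  diffCochain_mem_invariants _

/-- Multiplication of a cochain by the `i`-th coordinate of its first argument. -/
def mulCoord (i : Fin n) (f : HomCochain (Crys q M hq) (j + 1)) :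
    HomCochain (Crys q M hq) (j + 1) := fun y => coord y i • f y

lemma mulCoord_apply (i : Fin n) (f : HomCochain (Crys q M hq) (j + 1)) (y : Crys q M hq) :
    mulCoord i f y = coord y i • f y := rfl

lemma d_mulCoord_apply (i : Fin n) {f : HomCochain (Crys q M hq) (j + 1)} (hf : d f = 0)
    (y₀ y₁ : Crys q M hq) : d (mulCoord i f) y₀ y₁ = (coord y₁ - coord y₀) i • f y₁ := by
  rw [d_apply, sub_apply, mulCoord_apply, mulCoord_apply, map_zsmul,
    ← eq_d_apply_of_d_eq_zero hf, zsmul_apply, Pi.sub_apply, sub_smul]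

lemma translate_translation_mulCoord (i : Fin n) (f : HomCochain (Crys q M hq) (j + 1))
    (a : Fin n → ℤ) : translate (translation a) (mulCoord i f) =
      a i • translate (translation a) f + mulCoord i (translate (translation a) f) := by
  ext y : 1
  rw [translate_apply, mulCoord_apply, map_zsmul, coord_translation_mul, Pi.add_apply, add_smul,
    ← translate_apply, add_apply, mulCoord_apply, zsmul_apply]

/-- The tensor product of the `i`-th coordinate function with the form `B`. -/
def coordTensor (i : Fin n) (B : LatticeForm n j) : LatticeForm n (j + 1) :=
  ((LinearMap.proj i).smulRight B).uncurryLeft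

lemma coordTensor_zero (i : Fin n) : coordTensor i (0 : LatticeForm n j) = 0 := by
  ext v
  exact mul_zero _

lemma form_coordTensor (i : Fin n) (B : LatticeForm n j) :
    (form (coordTensor i B) : HomCochain (Crys q M hq) (j + 2)) = d (mulCoord i (form B)) := by
  ext y₀ y₁ : 2
  rw [form_apply, d_mulCoord_apply i (d_form B), coordTensor, LinearMap.curry_uncurryLeft,
    LinearMap.smulRight_apply, LinearMap.proj_apply, map_zsmul, zsmul_apply]

lemma exists_mem_invariants_partialLattice_succ (i : Fin n) {v : HomCochain (Crys q M hq) (j + 1)}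
    (hv : v ∈ invariants (partialLattice hq i) (j + 1)) {B : LatticeForm n j}
    (hB : translate (translation (Pi.single i 1)) v - v - form B ∈
      coboundaries (partialLattice hq i) j) :
    ∃ w ∈ invariants (partialLattice hq (i + 1)) (j + 1), d w = d v - form (coordTensor i B) := by
  obtain ⟨b, hb, hb'⟩ := exists_coboundary_translate_sub_eq
    (ξ := fun y => coord y i) (translation_mem_normalizer (Pi.single i 1) i)
    (fun g hg y => coord_mul_of_mem_partialLattice i hg y) (coord_translation_single_mul i) hB
  refine ⟨v - mulCoord i (form B) - b, invariants_anti (partialLattice_succ_le i)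
    (mem_invariants_sup_zpowers (sub_mem (sub_mem hv ?_)
      (mem_invariants_of_mem_coboundaries hb)) ?_), ?_⟩
  · rintro _ ⟨a, ha, rfl⟩
    rw [translate_translation_mulCoord, ha i le_rfl, zero_smul, zero_add,
      translate_translation_form]
  · rw [map_sub, map_sub, translate_translation_mulCoord, translate_translation_form,
      Pi.single_eq_same, one_smul, sub_eq_iff_eq_add.1 hb']
    abel
  · rw [map_sub, map_sub, d_eq_zero_of_mem_coboundaries hb, sub_zero, form_coordTensor]

lemma exists_sub_form_mem_coboundaries_partialLattice : ∀ {k : ℕ} (_ : k ≤ n) {j : ℕ}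
    {z : HomCochain (Crys q M hq) (j + 1)}, z ∈ invariants (partialLattice hq k) (j + 1) →
      d z = 0 → ∃ B : LatticeForm n j, z - form B ∈ coboundaries (partialLattice hq k) j
  | _, _, 0, z, _, hdz => by
    refine ⟨MultilinearMap.constOfIsEmpty ℤ _ (z 1 : ℤ), AddSubgroup.mem_bot.2 ?_⟩
    exact sub_eq_zero.2 (eq_d_apply_of_d_eq_zero hdz 1)
  | 0, _, j + 1, z, _, hdz => by
    refine ⟨0, z 1, partialLattice_zero (hq := hq) ▸ mem_invariants_bot _, ?_⟩
    rw [map_zero, sub_zero, ← eq_d_apply_of_d_eq_zero hdz]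
  | k + 1, hk, j + 1, z, hz, hdz => by
    let i : Fin n := ⟨k, hk⟩
    let t : Crys q M hq := translation (Pi.single i 1)
    obtain ⟨B, v, hv, hdv⟩ := exists_sub_form_mem_coboundaries_partialLattice (Nat.le_of_succ_le hk)
      (invariants_anti (partialLattice_le_succ k) hz) hdz
    have cocycle : d (translate t v - v) = 0 := by
      rw [map_sub, ← translate_d, hdv, map_sub, translate_translation_form,
        hz t (translation_single_mem i), sub_self]
    obtain ⟨C, hC⟩ := exists_sub_form_mem_coboundaries_partialLattice (Nat.le_of_succ_le hk)
      (sub_mem (translate_mem_invariants hv (translation_mem_normalizer _ k)) hv) cocycle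
    obtain ⟨w, hw, hdw⟩ := exists_mem_invariants_partialLattice_succ i hv hC
    exact ⟨B + coordTensor i C, w, hw, by rw [hdw, hdv, map_add, sub_sub]⟩

lemma mem_coboundaries_partialLattice_of_zsmul_mem {N : ℤ} (hN : N ≠ 0) : ∀ {k : ℕ} (_ : k ≤ n)
    {j : ℕ} {z : HomCochain (Crys q M hq) (j + 1)}, z ∈ invariants (partialLattice hq k) (j + 1) →
      N • z ∈ coboundaries (partialLattice hq k) j → z ∈ coboundaries (partialLattice hq k) j
  | _, _, 0, _, _, hz => AddSubgroup.mem_bot.2 (eq_zero_of_zsmul_eq_zero hN hz)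
  | 0, _, j + 1, z, _, hNz => by
    have hdz : d z = 0 := eq_zero_of_zsmul_eq_zero hN <| by
      rw [← map_zsmul, d_eq_zero_of_mem_coboundaries hNz]
    exact ⟨z 1, partialLattice_zero (hq := hq) ▸ mem_invariants_bot _,
      (eq_d_apply_of_d_eq_zero hdz 1).symm⟩
  | k + 1, hk, j + 1, z, hz, ⟨w, hw, hdw⟩ => by
    let i : Fin n := ⟨k, hk⟩
    let t : Crys q M hq := translation (Pi.single i 1)
    have ht := translation_mem_normalizer (hq := hq) (Pi.single i 1) k
    have hw' := invariants_anti (partialLattice_le_succ k) hw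
    obtain ⟨v, hv, rfl⟩ := mem_coboundaries_partialLattice_of_zsmul_mem hN (Nat.le_of_succ_le hk)
      (invariants_anti (partialLattice_le_succ k) hz) ⟨w, hw', hdw⟩
    obtain ⟨C, hC⟩ := exists_sub_form_mem_coboundaries_partialLattice (Nat.le_of_succ_le hk)
      (sub_mem (zsmul_mem hv N) hw') (by rw [map_sub, map_zsmul, hdw, sub_self])
    have hNv : N • (translate t v - v) ∈ coboundaries (partialLattice hq k) j := by
      convert sub_mem (translate_mem_coboundaries ht hC) hC using 1
      rw [map_sub, map_sub, hw t (translation_single_mem i), translate_translation_form,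
        map_zsmul, smul_sub]
      abel
    have hv' := mem_coboundaries_partialLattice_of_zsmul_mem hN (Nat.le_of_succ_le hk)
      (sub_mem (translate_mem_invariants hv ht) hv) hNv
    obtain ⟨w', hw', hdw'⟩ := exists_mem_invariants_partialLattice_succ i hv (B := 0)
      (by rwa [map_zero, sub_zero])
    exact ⟨w', hw', by rw [hdw', coordTensor_zero, map_zero, sub_zero]⟩

theorem exists_sub_form_mem_coboundaries {z : HomCochain (Crys q M hq) (j + 1)}
    (hz : z ∈ invariants (holonomy : Crys q M hq →* _).ker (j + 1)) (hdz : d z = 0) :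
    ∃ B : LatticeForm n j, z - form B ∈ coboundaries (holonomy : Crys q M hq →* _).ker j := by
  rw [← partialLattice_top] at hz ⊢
  exact exists_sub_form_mem_coboundaries_partialLattice le_rfl hz hdz

theorem mem_coboundaries_of_zsmul_mem {N : ℤ} (hN : N ≠ 0) {z : HomCochain (Crys q M hq) (j + 1)}
    (hz : z ∈ invariants (holonomy : Crys q M hq →* _).ker (j + 1))
    (hNz : N • z ∈ coboundaries (holonomy : Crys q M hq →* _).ker j) :
    z ∈ coboundaries (holonomy : Crys q M hq →* _).ker j := by
  rw [← partialLattice_top] at hz hNz ⊢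
  exact mem_coboundaries_partialLattice_of_zsmul_mem hN le_rfl hz hNz

end Form

section LowDegree

variable {n q : ℕ} [NeZero q] {M : Matrix (Fin n) (Fin n) ℤ} {hq : M ^ q = 1} {j : ℕ}

lemma map_vecCons_add (B : LatticeForm n (j + 1)) (a a' : Fin n → ℤ) (v : Fin j → Fin n → ℤ) :
    B (vecCons (a + a') v) = B (vecCons a v) + B (vecCons a' v) :=
  B.cons_add v a a'

lemma map_vecCons_vecCons_add (B : LatticeForm n (j + 2)) (a b b' : Fin n → ℤ)
    (v : Fin j → Fin n → ℤ) : B (vecCons a (vecCons (b + b') v)) =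
      B (vecCons a (vecCons b v)) + B (vecCons a (vecCons b' v)) :=
  map_vecCons_add (B.curryLeft a) b b' v

lemma map_vecCons_vecCons_vecCons_add (B : LatticeForm n (j + 3)) (a b c c' : Fin n → ℤ)
    (v : Fin j → Fin n → ℤ) : B (vecCons a (vecCons b (vecCons (c + c') v))) =
      B (vecCons a (vecCons b (vecCons c v))) + B (vecCons a (vecCons b (vecCons c' v))) :=
  map_vecCons_vecCons_add (B.curryLeft a) b c c' v

lemma domDomCongr_swap_apply_two (B : LatticeForm n 2) (a b : Fin n → ℤ) :
    B.domDomCongr (Equiv.swap 0 1) ![a, b] = B ![b, a] :=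
  congrArg B <| by ext i : 1; fin_cases i <;> rfl

lemma form_swap_add_form_mem_coboundaries_two (B : LatticeForm n 2) :
    form (B.domDomCongr (Equiv.swap 0 1)) + form B ∈
      coboundaries (holonomy : Crys q M hq →* _).ker 2 := by
  refine ⟨diffCochain fun v => -B ![v 0, v 0], diffCochain_mem_invariants _, ?_⟩
  rw [d_diffCochain_one, ← map_add form]
  refine diffCochain_eq_form fun v => ?_
  obtain ⟨a, b, rfl⟩ : ∃ a b, ![a, b] = v := ⟨_, _, FinVec.etaExpand_eq v⟩
  rw [_root_.add_apply, domDomCongr_swap_apply_two]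
  simp only [cons_val, map_vecCons_add, map_vecCons_vecCons_add]
  ring

lemma form_mem_coboundaries_of_symmetric {B : LatticeForm n 2}
    (hB : ∀ a b, B ![a, b] = B ![b, a]) :
    form B ∈ coboundaries (holonomy : Crys q M hq →* _).ker 2 := by
  refine mem_coboundaries_of_zsmul_mem two_ne_zero (form_mem_invariants B) ?_
  have hswap : B.domDomCongr (Equiv.swap 0 1) = B := by
    refine MultilinearMap.ext fun v => ?_
    obtain ⟨a, b, rfl⟩ : ∃ a b, ![a, b] = v := ⟨_, _, FinVec.etaExpand_eq v⟩
    rw [domDomCongr_swap_apply_two, hB]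
  rw [two_zsmul]
  simpa only [hswap] using form_swap_add_form_mem_coboundaries_two B (hq := hq)

/-- The pairing of a degree `2` cochain with the homology class `a ∧ b` of the lattice. -/
def wedgePairing (a b : Fin n → ℤ) : HomCochain (Crys q M hq) 3 →+ ℤ where
  toFun z := (z 1 (translation a) (translation a * translation b) : ℤ) -
    (z 1 (translation b) (translation a * translation b) : ℤ)
  map_zero' := sub_self _
  map_add' _ _ := add_sub_add_comm _ _ _ _

lemma wedgePairing_diffCochain (a b : Fin n → ℤ) (F : (Fin 2 → Fin n → ℤ) → ℤ) :
    wedgePairing a b (diffCochain F : HomCochain (Crys q M hq) 3) = F ![a, b] - F ![b, a] := by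
  change F ![coord (translation a) - coord 1, coord (translation a * translation b) -
    coord (translation a)] - F ![coord (translation b) - coord 1,
      coord (translation a * translation b) - coord (translation b)] = _
  simp only [coord_translation_mul, coord_translation, coord_one, sub_zero, add_sub_cancel_left,
    add_sub_cancel_right]

lemma wedgePairing_form (a b : Fin n → ℤ) (B : LatticeForm n 2) :
    wedgePairing a b (form B : HomCochain (Crys q M hq) 3) = B ![a, b] - B ![b, a] :=
  wedgePairing_diffCochain a b B

lemma wedgePairing_of_mem_coboundaries (a b : Fin n → ℤ) {z : HomCochain (Crys q M hq) 3}
    (hz : z ∈ coboundaries (holonomy : Crys q M hq →* _).ker 2) : wedgePairing a b z = 0 := by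
  obtain ⟨w, hw, rfl⟩ := hz
  have invariant (c e : Fin n → ℤ) : w (translation c) (translation c * translation e) =
      w 1 (translation e) := by
    have h := congrFun (congrFun (hw _ (translation_mem_ker_holonomy c)) 1) (translation e)
    rwa [translate_apply, translate_apply, mul_one] at h
  have boundary (c e : Fin n → ℤ) : d w 1 (translation c) (translation c * translation e) =
      (w 1 (translation e) - (w 1 (translation c * translation e) - w 1 (translation c)) : ℤ) :=
    congrArg (fun x : ℤ => x - _) (invariant c e)
  have hba := boundary b a
  rw [← translation_mul_comm] at hba
  change (d w 1 (translation a) _ - d w 1 (translation b) _ : ℤ) = 0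
  rw [boundary, hba]
  exact (by intro x y z; ring : ∀ x y z : ℤ, x - (y - z) - (z - (y - x)) = 0) _ _ _

lemma alternatization_apply_two (B : LatticeForm n 2) (a b : Fin n → ℤ) :
    MultilinearMap.alternatization B ![a, b] = B ![a, b] - B ![b, a] := by
  have huniv : (Finset.univ : Finset (Equiv.Perm (Fin 2))) = {1, Equiv.swap 0 1} := by decide
  rw [MultilinearMap.alternatization_apply, huniv, Finset.sum_pair (by decide),
    domDomCongr_swap_apply_two, Equiv.Perm.sign_swap (by decide), Equiv.Perm.sign_one, one_smul,
    Units.neg_smul, one_smul, ← sub_eq_add_neg]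
  rfl

lemma exists_sub_form_mem_coboundaries_two {z : HomCochain (Crys q M hq) 3}
    (hz : z ∈ invariants (holonomy : Crys q M hq →* _).ker 3) (hdz : d z = 0) :
    ∃ B : LatticeForm n 2, z - form B ∈ coboundaries (holonomy : Crys q M hq →* _).ker 2 ∧
      ∀ a b, wedgePairing a b z = MultilinearMap.alternatization B ![a, b] := by
  obtain ⟨B, hB⟩ := exists_sub_form_mem_coboundaries hz hdz
  refine ⟨B, hB, fun a b => ?_⟩
  have h := wedgePairing_of_mem_coboundaries a b hB
  rw [map_sub, wedgePairing_form, ← alternatization_apply_two] at h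
  exact sub_eq_zero.1 h

lemma mem_coboundaries_of_wedgePairing_eq_zero {z : HomCochain (Crys q M hq) 3}
    (hz : z ∈ invariants (holonomy : Crys q M hq →* _).ker 3) (hdz : d z = 0)
    (h : ∀ a b, wedgePairing a b z = 0) :
    z ∈ coboundaries (holonomy : Crys q M hq →* _).ker 2 := by
  obtain ⟨B, hzB, hB⟩ := exists_sub_form_mem_coboundaries_two hz hdz
  rw [← sub_add_cancel z (form B)]
  refine add_mem hzB (form_mem_coboundaries_of_symmetric fun a b => sub_eq_zero.1 ?_)
  rw [← alternatization_apply_two, ← hB, h]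

lemma translate_rotation_pow_form (m : ℕ) (B : LatticeForm n j) :
    translate ((rotation : Crys q M hq) ^ m) (form B) =
      form (B.compLinearMap fun _ => (M ^ m).mulVecLin) :=
  (translate_rotation_pow_diffCochain m _).trans (diffCochain_eq_form fun _ => rfl)

lemma wedgePairing_translate_rotation (a b : Fin n → ℤ) {z : HomCochain (Crys q M hq) 3}
    (hz : z ∈ invariants (holonomy : Crys q M hq →* _).ker 3) (hdz : d z = 0) :
    wedgePairing a b (translate rotation z) = wedgePairing (M *ᵥ a) (M *ᵥ b) z := by
  obtain ⟨B, hzB, hB⟩ := exists_sub_form_mem_coboundaries_two hz hdz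
  have h := wedgePairing_of_mem_coboundaries a b (translate_mem_coboundaries_ker hzB rotation)
  have hform := translate_rotation_pow_form (hq := hq) 1 B
  rw [pow_one, pow_one] at hform
  rw [map_sub, map_sub, hform, wedgePairing_form, sub_eq_zero] at h
  have hcomp (c e : Fin n → ℤ) :
      B.compLinearMap (fun _ => M.mulVecLin) ![c, e] = B ![M *ᵥ c, M *ᵥ e] :=
    congrArg B <| by ext i : 1; fin_cases i <;> rfl
  rw [h, hB, alternatization_apply_two, hcomp, hcomp]

lemma form_swap_add_form_mem_coboundaries_three (B : LatticeForm n 3) (i : Fin 2) :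
    form (B.domDomCongr (Equiv.swap i.castSucc i.succ)) + form B ∈
      coboundaries (holonomy : Crys q M hq →* _).ker 3 := by
  have key (F : (Fin 2 → Fin n → ℤ) → ℤ) (hF : ∀ a b c : Fin n → ℤ,
      F ![b, c] - F ![a + b, c] + F ![a, b + c] - F ![a, b] =
        B.domDomCongr (Equiv.swap i.castSucc i.succ) ![a, b, c] + B ![a, b, c]) :
      form (B.domDomCongr (Equiv.swap i.castSucc i.succ)) + form B ∈
        coboundaries (holonomy : Crys q M hq →* _).ker 3 := by
    refine ⟨diffCochain F, diffCochain_mem_invariants _, ?_⟩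
    rw [d_diffCochain_two, ← map_add form]
    refine diffCochain_eq_form fun v => ?_
    obtain ⟨a, b, c, rfl⟩ : ∃ a b c, ![a, b, c] = v := ⟨_, _, _, FinVec.etaExpand_eq v⟩
    exact hF a b c
  fin_cases i
  · refine key (fun v => -B ![v 0, v 0, v 1]) fun a b c => ?_
    have hswap : B.domDomCongr (Equiv.swap 0 1) ![a, b, c] = B ![b, a, c] :=
      congrArg B <| by ext i : 1; fin_cases i <;> rfl
    refine Eq.trans ?_ (congrArg (· + _) hswap.symm)
    simp only [cons_val, map_vecCons_add, map_vecCons_vecCons_add,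
      map_vecCons_vecCons_vecCons_add]
    ring
  · refine key (fun v => B ![v 0, v 1, v 1]) fun a b c => ?_
    have hswap : B.domDomCongr (Equiv.swap 1 2) ![a, b, c] = B ![a, c, b] :=
      congrArg B <| by ext i : 1; fin_cases i <;> rfl
    refine Eq.trans ?_ (congrArg (· + _) hswap.symm)
    simp only [cons_val, map_vecCons_add, map_vecCons_vecCons_add,
      map_vecCons_vecCons_vecCons_add]
    ring

lemma form_domDomCongr_sub_mem_coboundaries (σ : Equiv.Perm (Fin 3)) (B : LatticeForm n 3) :
    form (B.domDomCongr σ) - (Equiv.Perm.sign σ : ℤ) • form B ∈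
      coboundaries (holonomy : Crys q M hq →* _).ker 3 := by
  have hσ : σ ∈ Submonoid.closure
      (Set.range fun i : Fin 2 => Equiv.swap i.castSucc i.succ) := by
    rw [Equiv.Perm.mclosure_swap_castSucc_succ]; trivial
  induction hσ using Submonoid.closure_induction generalizing B with
  | mem σ hσ =>
    obtain ⟨i, rfl⟩ := hσ
    simpa [Equiv.Perm.sign_swap i.castSucc_lt_succ.ne] using
      form_swap_add_form_mem_coboundaries_three B i
  | one =>
    have h : B.domDomCongr (1 : Equiv.Perm (Fin 3)) = B := rfl
    rw [h, Equiv.Perm.sign_one, Units.val_one, one_smul, sub_self]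
    exact zero_mem _
  | mul σ τ _ _ ihσ ihτ =>
    have h := add_mem (ihσ (B.domDomCongr τ)) (zsmul_mem (ihτ B) (Equiv.Perm.sign σ : ℤ))
    rw [smul_sub, smul_smul, ← Units.val_mul, ← map_mul, sub_add_sub_cancel] at h
    exact h

lemma six_zsmul_form_sub_form_alternatization_mem_coboundaries (B : LatticeForm n 3) :
    (6 : ℤ) • form B - form (MultilinearMap.alternatization B : LatticeForm n 3) ∈
      coboundaries (holonomy : Crys q M hq →* _).ker 3 := by
  have h := neg_mem <| sum_mem (t := Finset.univ) fun (σ : Equiv.Perm (Fin 3)) _ =>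
    zsmul_mem (form_domDomCongr_sub_mem_coboundaries (hq := hq) σ B) (Equiv.Perm.sign σ : ℤ)
  have hcard : (Finset.univ : Finset (Equiv.Perm (Fin 3))).card = 6 := by decide
  simp only [smul_sub, smul_smul, ← Units.val_mul, Int.units_mul_self, Units.val_one, one_smul,
    Finset.sum_sub_distrib, Finset.sum_const, hcard, neg_sub, ← map_zsmul form, ← map_sum] at h
  rwa [MultilinearMap.alternatization_coe, ← map_zsmul]

end LowDegree

end HomCochain

/-! ### Alternating forms and minors -/

section Alternating

variable {n j : ℕ}

lemma eq_zero_of_forall_strictMono {f : (Fin j → Fin n) → ℤ}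
    (hperm : ∀ (a : Fin j → Fin n) (σ : Equiv.Perm (Fin j)), f a = 0 → f (a ∘ σ) = 0)
    (hinj : ∀ a : Fin j → Fin n, ¬ a.Injective → f a = 0)
    (hmono : ∀ a : Fin j → Fin n, StrictMono a → f a = 0) (a : Fin j → Fin n) : f a = 0 := by
  by_cases ha : a.Injective
  · have h := hperm _ (Tuple.sort a)⁻¹ (hmono (a ∘ Tuple.sort a)
      ((Tuple.monotone_sort a).strictMono_of_injective (ha.comp (Equiv.injective _))))
    rwa [Function.comp_assoc, Equiv.Perm.inv_def, Equiv.self_comp_symm, Function.comp_id] at h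
  · exact hinj a ha

lemma sum_mul_minor_eq_zero_of_strictMono {s : Finset ℕ} {c : ℕ → ℤ}
    {M : Matrix (Fin n) (Fin n) ℤ}
    (h : ∀ a p : Fin j → Fin n, StrictMono a → StrictMono p →
      ∑ m ∈ s, c m * ((M ^ m).submatrix a p).det = 0) (a p : Fin j → Fin n) :
    ∑ m ∈ s, c m * ((M ^ m).submatrix a p).det = 0 := by
  revert a
  refine eq_zero_of_forall_strictMono (fun a σ ha => ?_) (fun a ha => ?_) fun a ha => ?_
  · have hdet (m : ℕ) : ((M ^ m).submatrix (a ∘ σ) p).det =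
      Equiv.Perm.sign σ * ((M ^ m).submatrix a p).det := det_permute σ ((M ^ m).submatrix a p)
    simp only [hdet, mul_left_comm _ (Equiv.Perm.sign σ : ℤ), ← Finset.mul_sum, ha, mul_zero]
  · obtain ⟨i, l, hil, hne⟩ := Function.not_injective_iff.1 ha
    refine Finset.sum_eq_zero fun m _ => ?_
    rw [det_zero_of_row_eq hne (funext fun k => by simp only [submatrix_apply, hil]), mul_zero]
  revert p
  refine eq_zero_of_forall_strictMono (fun p σ hp => ?_) (fun p hp => ?_) fun p hp => h a p ha hp
  · have hdet (m : ℕ) : ((M ^ m).submatrix a (p ∘ σ)).det =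
      Equiv.Perm.sign σ * ((M ^ m).submatrix a p).det := det_permute' σ ((M ^ m).submatrix a p)
    simp only [hdet, mul_left_comm _ (Equiv.Perm.sign σ : ℤ), ← Finset.mul_sum, hp, mul_zero]
  · obtain ⟨i, l, hil, hne⟩ := Function.not_injective_iff.1 hp
    refine Finset.sum_eq_zero fun m _ => ?_
    rw [det_zero_of_column_eq hne (fun k => by simp only [submatrix_apply, hil]), mul_zero]

open HomCochain

lemma latticeForm_apply_eq_sum (B : LatticeForm n j) (v : Fin j → Fin n → ℤ) :
    B v = ∑ a : Fin j → Fin n, (∏ l, v l (a l)) * B fun l => Pi.single (a l) 1 := by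
  conv_lhs => rw [show v = fun l => ∑ k, v l k • Pi.single k 1 from
    funext fun l => pi_eq_sum_univ' (v l)]
  simp only [MultilinearMap.map_sum, MultilinearMap.map_smul_univ, smul_eq_mul]

lemma alternatization_apply_eq_sum_det (B : LatticeForm n j) (v : Fin j → Fin n → ℤ) :
    MultilinearMap.alternatization B v =
      ∑ a : Fin j → Fin n, (of fun i l => v i (a l)).det * B fun l => Pi.single (a l) 1 := by
  simp only [MultilinearMap.alternatization_apply, MultilinearMap.domDomCongr_apply,
    latticeForm_apply_eq_sum B fun _ => v _, Finset.smul_sum, det_apply, Finset.sum_mul,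
    smul_mul_assoc, of_apply]
  exact Finset.sum_comm

lemma sum_zsmul_alternatization_comp_pow_eq_zero {s : Finset ℕ} {c : ℕ → ℤ}
    {M : Matrix (Fin n) (Fin n) ℤ}
    (h : ∀ a p : Fin j → Fin n, StrictMono a → StrictMono p →
      ∑ m ∈ s, c m * ((M ^ m).submatrix a p).det = 0) (B : LatticeForm n j) :
    ∑ m ∈ s, c m • (MultilinearMap.alternatization B : LatticeForm n j).compLinearMap
      (fun _ => (M ^ m).mulVecLin) = 0 := by
  refine Module.Basis.ext_multilinear (fun _ => Pi.basisFun ℤ (Fin n)) fun p => ?_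
  have value (m : ℕ) : (MultilinearMap.alternatization B : LatticeForm n j).compLinearMap
      (fun _ => (M ^ m).mulVecLin) (fun i => Pi.basisFun ℤ (Fin n) (p i)) =
      ∑ a : Fin j → Fin n, ((M ^ m).submatrix a p).det * B fun l => Pi.single (a l) 1 := by
    simp only [MultilinearMap.compLinearMap_apply, AlternatingMap.coe_multilinearMap,
      alternatization_apply_eq_sum_det]
    refine Finset.sum_congr rfl fun a _ => congrArg (· * _) ?_
    rw [← det_transpose]
    congr 1
    ext l i
    simp
  simp only [_root_.sum_apply, _root_.smul_apply, value, smul_eq_mul,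
    Finset.mul_sum, ← mul_assoc]
  rw [Finset.sum_comm]
  refine Finset.sum_eq_zero fun a _ => ?_
  rw [← Finset.sum_mul, sum_mul_minor_eq_zero_of_strictMono h a p, zero_mul]

end Alternating

namespace HomCochain

lemma sum_zsmul_translate_rotation_pow_mem_coboundaries {n q : ℕ} [NeZero q]
    {M : Matrix (Fin n) (Fin n) ℤ} {hq : M ^ q = 1} {s : Finset ℕ} {c : ℕ → ℤ}
    (hc : ∀ a p : Fin 3 → Fin n, StrictMono a → StrictMono p →
      ∑ m ∈ s, c m * ((M ^ m).submatrix a p).det = 0) {z : HomCochain (Crys q M hq) 4}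
    (hz : z ∈ invariants (holonomy : Crys q M hq →* _).ker 4) (hdz : d z = 0) :
    ∑ m ∈ s, c m • translate (rotation ^ m) z ∈
      coboundaries (holonomy : Crys q M hq →* _).ker 3 := by
  obtain ⟨B, hB⟩ := exists_sub_form_mem_coboundaries hz hdz
  have h6 : (6 : ℤ) • z - form (MultilinearMap.alternatization B : LatticeForm n 3) ∈
      coboundaries (holonomy : Crys q M hq →* _).ker 3 := by
    convert add_mem (zsmul_mem hB 6)
      (six_zsmul_form_sub_form_alternatization_mem_coboundaries B) using 1
    rw [smul_sub, sub_add_sub_cancel]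
  have vanish : ∑ m ∈ s, c m • translate ((rotation : Crys q M hq) ^ m)
      (form (MultilinearMap.alternatization B : LatticeForm n 3)) = 0 := by
    simp only [translate_rotation_pow_form, ← map_zsmul form, ← map_sum]
    rw [sum_zsmul_alternatization_comp_pow_eq_zero hc, map_zero]
  refine mem_coboundaries_of_zsmul_mem (N := 6) (by norm_num)
    (sum_mem fun m _ => zsmul_mem (translate_mem_invariants_ker hz _) _) ?_
  have h := sum_mem (t := s) fun m _ =>
    zsmul_mem (translate_mem_coboundaries_ker h6 (rotation ^ m)) (c m)
  simp only [map_sub, map_zsmul, smul_sub, Finset.sum_sub_distrib, vanish, sub_zero] at h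
  simpa only [Finset.smul_sum, smul_comm (6 : ℤ)] using h

/-! ### Classes of degree two which die on the lattice -/

section

variable {G : Type}

/-- The constant cochain with value `1`, which represents the unit of the cohomology ring. -/
def one : HomCochain G 1 := fun _ => (1 : ℤ)

lemma one_mem_invariants [Group G] : (one : HomCochain G 1) ∈ invariants ⊤ 1 := fun _ _ => rfl

lemma d_one : d (one : HomCochain G 1) = 0 := d_d (show HomCochain G 0 from (1 : ℤ))

lemma exists_eq_zsmul_one [Inhabited G] {f : HomCochain G 1} (hf : d f = 0) :
    ∃ m : ℤ, f = m • one :=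
  ⟨f default, (eq_d_apply_of_d_eq_zero hf default).trans <| ext fun _ =>
    (mul_one (show ℤ from f default)).symm⟩

end

lemma translate_rotation_form_comp_sub {n q : ℕ} [NeZero q] {M : Matrix (Fin n) (Fin n) ℤ}
    {hq : M ^ q = 1} {c : ℤ} {P : Matrix (Fin n) (Fin n) ℤ} (hP : P * (M - 1) = c • 1)
    (B : LatticeForm n 1) :
    translate (rotation : Crys q M hq) (form (B.compLinearMap fun _ => P.mulVecLin)) -
      form (B.compLinearMap fun _ => P.mulVecLin) = c • form B := by
  have hform := translate_rotation_pow_form (hq := hq) 1 (B.compLinearMap fun _ => P.mulVecLin)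
  rw [pow_one, pow_one] at hform
  rw [hform, ← map_sub, ← map_zsmul]
  refine congrArg form (MultilinearMap.ext fun w => ?_)
  obtain ⟨a, rfl⟩ : ∃ a, ![a] = w := ⟨_, FinVec.etaExpand_eq w⟩
  have hcomp (C : LatticeForm n 1) (N : Matrix (Fin n) (Fin n) ℤ) (b : Fin n → ℤ) :
      C.compLinearMap (fun _ => N.mulVecLin) ![b] = C ![N *ᵥ b] :=
    congrArg C <| by ext i : 1; fin_cases i; rfl
  obtain ⟨f, hf⟩ : ∃ f : (Fin n → ℤ) →ₗ[ℤ] ℤ, ∀ b, f b = B ![b] :=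
    ⟨B.toLinearMap ![0] 0, fun b => congrArg B <| by ext i : 1; fin_cases i; rfl⟩
  have hPa : P *ᵥ (M *ᵥ a) = P *ᵥ a + c • a := by
    rw [← sub_eq_iff_eq_add', mulVec_mulVec, ← sub_mulVec, ← mul_sub_one, hP, smul_mulVec,
      one_mulVec]
  rw [_root_.sub_apply, _root_.smul_apply, hcomp, hcomp, hcomp, ← hf, hPa, ← hf, ← hf, map_add,
    map_smul, add_sub_cancel_left]

lemma exists_periodicityRel_zsmul_one {n q : ℕ} [NeZero q] {M : Matrix (Fin n) (Fin n) ℤ}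
    {hq : M ^ q = 1} {c : ℤ} {P : Matrix (Fin n) (Fin n) ℤ} (hP : P * (M - 1) = c • 1)
    {y : HomCochain (Crys q M hq) 3} (hy : y ∈ invariants ⊤ 3)
    (hyker : y ∈ coboundaries (holonomy : Crys q M hq →* _).ker 2) :
    ∃ m : ℤ, PeriodicityRel holonomy rotation (c • y) (m • one) := by
  obtain ⟨v, hv, rfl⟩ := hyker
  have hdz : d (translate rotation v - v) = 0 := by
    rw [map_sub, ← translate_d, hy _ trivial, sub_self]
  obtain ⟨B, g, hg, hgB⟩ := exists_sub_form_mem_coboundaries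
    (sub_mem (translate_mem_invariants_ker hv rotation) hv) hdz
  have hPB := translate_rotation_form_comp_sub (hq := hq) hP B
  have hu : translate rotation (c • v - form (B.compLinearMap fun _ => P.mulVecLin)) -
      (c • v - form (B.compLinearMap fun _ => P.mulVecLin)) = d (c • g) := by
    rw [map_sub, sub_sub_sub_comm, hPB, map_zsmul, map_zsmul, hgB, smul_sub, smul_sub]
  have hrel : PeriodicityRel holonomy rotation (c • d v) (norm q rotation (c • g)) :=
    ⟨_, sub_mem (zsmul_mem hv c) (form_mem_invariants _), c • g, zsmul_mem hg c,
      by rw [map_sub, d_form, map_zsmul, sub_zero], hu, rfl⟩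
  obtain ⟨m, hm⟩ := exists_eq_zsmul_one (hrel.d_right rotation_pow_card)
  exact ⟨m, hm ▸ hrel⟩

end HomCochain

/-! ### The lattice of the example -/

/-- The orbit of the first basis vector under `holM`; its first six members are the standard
basis. -/
def orbit (k : ℕ) : Fin 6 → ℤ :=
  ![![1, 0, 0, 0, 0, 0], ![0, 1, 0, 0, 0, 0], ![0, 0, 1, 0, 0, 0], ![0, 0, 0, 1, 0, 0],
    ![0, 0, 0, 0, 1, 0], ![0, 0, 0, 0, 0, 1], ![-1, -1, 0, 1, 0, -1], ![1, 0, -1, -1, 1, 1],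
    ![-1, 0, 0, 0, -1, 0], ![0, -1, 0, 0, 0, -1], ![1, 1, -1, -1, 0, 1],
    ![-1, 0, 1, 0, -1, -1]] (Fin.ofNat 12 k)

lemma holM_mulVec (a : Fin 6 → ℤ) :
    holM *ᵥ a = ![-a 5, a 0 - a 5, a 1, a 2 + a 5, a 3, a 4 - a 5] := by
  funext i
  fin_cases i <;> simp [holM, Matrix.mulVec, dotProduct, Fin.sum_univ_six] <;> ring

lemma orbit_mod (k : ℕ) : orbit (k % 12) = orbit k := by
  simp [orbit, Fin.ofNat]

lemma holM_mulVec_orbit (k : ℕ) : holM *ᵥ orbit k = orbit (k + 1) := by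
  have table : ∀ k < 12, holM *ᵥ orbit k = orbit (k + 1) := by
    simp only [holM_mulVec]
    decide +kernel
  rw [← orbit_mod k, table _ (Nat.mod_lt _ (by norm_num)), ← orbit_mod, Nat.mod_add_mod, orbit_mod]

lemma holM_pow_mulVec_orbit (m k : ℕ) : (holM ^ m) *ᵥ orbit k = orbit (k + m) := by
  induction m with
  | zero => simp
  | succ m ih => rw [pow_succ', ← mulVec_mulVec, ih, holM_mulVec_orbit, add_assoc]

lemma single_eq_orbit (i : Fin 6) : Pi.single i 1 = orbit i := by
  revert i
  decide +kernel

lemma holM_pow_apply (m : ℕ) (i p : Fin 6) : (holM ^ m) i p = orbit (p + m) i := by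
  rw [← holM_pow_mulVec_orbit, ← single_eq_orbit, mulVec_single_one, col_apply]

lemma sum_mul_minor_holM_eq_zero {a p : Fin 3 → Fin 6} (ha : StrictMono a) (hp : StrictMono p) :
    ∑ m ∈ {0, 1, 4, 5, 8, 9}, (if m % 4 = 0 then -1 else 1) * ((holM ^ m).submatrix a p).det =
      0 := by
  have table : ∀ a₀ a₁ a₂ : Fin 6, a₀ < a₁ → a₁ < a₂ → ∀ p₀ p₁ p₂ : Fin 6, p₀ < p₁ → p₁ < p₂ →
      ∑ m ∈ {0, 1, 4, 5, 8, 9}, (if m % 4 = 0 then -1 else 1) *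
        (of fun i l => orbit (![p₀, p₁, p₂] l + m) (![a₀, a₁, a₂] i)).det = 0 := by
    simp only [det_fin_three, of_apply, cons_val]
    decide +kernel
  simpa only [det_fin_three, of_apply, cons_val, submatrix_apply, holM_pow_apply] using
    table (a 0) (a 1) (a 2) (ha (by decide)) (ha (by decide)) (p 0) (p 1) (p 2)
      (hp (by decide)) (hp (by decide))

section InvariantAlternatingForm

variable {A : (Fin 6 → ℤ) [⋀^Fin 2]→ₗ[ℤ] ℤ}

lemma alternatingMap_swap {V : Type*} [AddCommGroup V] (A : V [⋀^Fin 2]→ₗ[ℤ] ℤ) (a b : V) :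
    A ![a, b] = -A ![b, a] := by
  rw [← A.map_swap ![b, a] zero_ne_one]
  refine congrArg A ?_
  ext i : 1
  fin_cases i <;> rfl

lemma alternatingMap_self {V : Type*} [AddCommGroup V] (A : V [⋀^Fin 2]→ₗ[ℤ] ℤ) (a : V) :
    A ![a, a] = 0 :=
  A.map_eq_zero_of_eq _ (i := 0) (j := 1) rfl zero_ne_one

lemma map_orbit_add_eq (hA : ∀ a b, A ![holM *ᵥ a, holM *ᵥ b] = A ![a, b]) (m k : ℕ) :
    A ![orbit m, orbit (m + k)] = A ![orbit 0, orbit k] := by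
  induction m with
  | zero => rw [zero_add]
  | succ m ih => rw [← ih, ← hA (orbit m), holM_mulVec_orbit, holM_mulVec_orbit, add_right_comm]

lemma orbit_six : orbit 6 = -orbit 0 - orbit 1 + orbit 3 - orbit 5 := by decide +kernel

lemma map_orbit_six (A : (Fin 6 → ℤ) [⋀^Fin 2]→ₗ[ℤ] ℤ) (a : Fin 6 → ℤ) :
    A ![a, orbit 6] = -A ![a, orbit 0] - A ![a, orbit 1] + A ![a, orbit 3] - A ![a, orbit 5] := by
  obtain ⟨f, hf⟩ : ∃ f : (Fin 6 → ℤ) →ₗ[ℤ] ℤ, ∀ b, f b = A ![a, b] :=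
    ⟨A.toMultilinearMap.toLinearMap ![a, 0] 1,
      fun b => congrArg A <| by ext i : 1; fin_cases i <;> rfl⟩
  simp only [← hf, orbit_six, map_sub, map_add, map_neg]

lemma map_orbit_zero_orbit_eq_zero (hA : ∀ a b, A ![holM *ᵥ a, holM *ᵥ b] = A ![a, b])
    (h : ∀ k : Fin 3, A ![orbit 0, orbit (k + 1)] = 0) {k : ℕ} (hk : k < 6) :
    A ![orbit 0, orbit k] = 0 := by
  have shift := map_orbit_add_eq hA
  have swap := alternatingMap_swap A
  have h₁ : A ![orbit 0, orbit 1] = 0 := h 0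
  have h₂ : A ![orbit 0, orbit 2] = 0 := h 1
  have h₃ : A ![orbit 0, orbit 3] = 0 := h 2
  have h₄ : A ![orbit 0, orbit 4] = 0 := by
    have := map_orbit_six A (orbit 2)
    rw [shift 2 4, swap _ (orbit 0), swap _ (orbit 1), shift 1 1, shift 2 1, shift 2 3] at this
    lia
  have h₅ : A ![orbit 0, orbit 5] = 0 := by
    have := map_orbit_six A (orbit 1)
    rw [shift 1 5, swap _ (orbit 0), alternatingMap_self, shift 1 2, shift 1 4] at this
    lia
  interval_cases k
  · exact alternatingMap_self A _
  all_goals assumption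

lemma eq_zero_of_map_holM_eq (hA : ∀ a b, A ![holM *ᵥ a, holM *ᵥ b] = A ![a, b])
    (h : ∀ k : Fin 3, A ![orbit 0, orbit (k + 1)] = 0) : A = 0 := by
  have eq_zero_of_le {i l : Fin 6} (hle : i ≤ l) : A ![orbit i, orbit l] = 0 := by
    obtain ⟨k, hk⟩ := Nat.exists_eq_add_of_le (Fin.le_def.1 hle)
    rw [hk, map_orbit_add_eq hA, map_orbit_zero_orbit_eq_zero hA h (by lia)]
  refine (Pi.basisFun ℤ (Fin 6)).ext_alternating fun s _ => ?_
  have hs : (fun i => Pi.basisFun ℤ (Fin 6) (s i)) = ![orbit (s 0), orbit (s 1)] := by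
    ext i : 1
    rw [Pi.basisFun_apply, single_eq_orbit]
    fin_cases i <;> rfl
  rw [hs, AlternatingMap.zero_apply]
  rcases le_total (s 0) (s 1) with hle | hle
  · exact eq_zero_of_le hle
  · rw [alternatingMap_swap, eq_zero_of_le hle, neg_zero]

end InvariantAlternatingForm

namespace HomCochain

local notation "Γ" => Crys 12 holM holM_pow

lemma translate_norm_sub_norm_mem_coboundaries {z : HomCochain Γ 4}
    (hz : z ∈ invariants (holonomy : Γ →* _).ker 4) (hdz : d z = 0) :
    translate rotation (norm 3 (rotation ^ 4) z) - norm 3 (rotation ^ 4) z ∈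
      coboundaries (holonomy : Γ →* _).ker 3 := by
  convert sum_zsmul_translate_rotation_pow_mem_coboundaries
    (fun _ _ ha hp => sum_mul_minor_holM_eq_zero ha hp) hz hdz using 1
  simp only [norm_apply, Finset.sum_range_succ, Finset.sum_range_zero, map_add, map_zero,
    translate_translate, ← pow_mul, ← pow_succ, Finset.mem_insert, Finset.mem_singleton,
    Finset.sum_insert, Finset.sum_singleton, reduceCtorEq, Nat.reduceMod, Nat.reduceMul,
    Nat.reduceAdd, Nat.reduceEqDiff, or_self, not_false_eq_true, if_true, if_false, neg_smul,
    one_smul]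
  abel

lemma exists_periodicityRel_three_zsmul {x : HomCochain Γ 5} (hx : x ∈ invariants ⊤ 5)
    (h4 : (4 : ℤ) • x ∈ coboundaries ⊤ 4) :
    ∃ y, PeriodicityRel holonomy rotation ((3 : ℤ) • x) y :=
  PeriodicityRel.exists_zsmul_of_norm_condition (k := 4) (l := 3) rfl rotation_pow_card hx
    (mem_coboundaries_of_zsmul_mem four_ne_zero (invariants_anti le_top hx)
      (coboundaries_anti le_top h4))
    (fun _ hz h => mem_coboundaries_of_zsmul_mem four_ne_zero hz h)
    fun _ hz hdz => translate_norm_sub_norm_mem_coboundaries hz hdz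

section

variable {n q : ℕ} [NeZero q] {M : Matrix (Fin n) (Fin n) ℤ} {hq : M ^ q = 1}

/-- The monomial `v ↦ ∏ l, v l (k l)` in the coordinates, as a multilinear form. -/
def coordMonomial {j : ℕ} (k : Fin j → Fin n) : LatticeForm n j :=
  (MultilinearMap.mkPiAlgebra ℤ (Fin j) ℤ).compLinearMap fun l => LinearMap.proj (k l)

lemma coordMonomial_apply {j : ℕ} (k : Fin j → Fin n) (v : Fin j → Fin n → ℤ) :
    coordMonomial k v = ∏ l, v l (k l) := rfl

lemma wedgePairing_norm_diffCochain (a b : Fin n → ℤ) (F : (Fin 2 → Fin n → ℤ) → ℤ) (k : ℕ) :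
    wedgePairing a b (norm k rotation (diffCochain F : HomCochain (Crys q M hq) 3)) =
      ∑ m ∈ Finset.range k, (F ![(M ^ m) *ᵥ a, (M ^ m) *ᵥ b] -
        F ![(M ^ m) *ᵥ b, (M ^ m) *ᵥ a]) := by
  have hcomp (m : ℕ) (c e : Fin n → ℤ) :
      (fun i => (M ^ m) *ᵥ (![c, e] : Fin 2 → Fin n → ℤ) i) =
        ![(M ^ m) *ᵥ c, (M ^ m) *ᵥ e] := by
    ext i : 1; fin_cases i <;> rfl
  simp only [norm_apply, map_sum, translate_rotation_pow_diffCochain, wedgePairing_diffCochain,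
    hcomp]

lemma periodicityRel_zero_norm_diffCochain {B : LatticeForm n 3} {F : (Fin 2 → Fin n → ℤ) → ℤ}
    (h : translate (rotation : Crys q M hq) (form B) - form B = d (diffCochain F)) :
    PeriodicityRel holonomy rotation 0 (norm q (rotation : Crys q M hq) (diffCochain F)) :=
  ⟨form B, form_mem_invariants B, diffCochain F, diffCochain_mem_invariants F, d_form B, h, rfl⟩

lemma periodicityRel_zero_norm_form (B : LatticeForm n 2) :
    PeriodicityRel holonomy rotation 0 (norm q (rotation : Crys q M hq) (form B)) :=
  periodicityRel_zero_norm_diffCochain (B := 0) <|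
    (by simp only [map_zero, sub_zero] : _ = _).trans (d_form B).symm

end

/-- A trilinear form which represents a `holM`-invariant class of degree `3` of the lattice,
although it is itself `holM`-invariant only up to the coboundary of `normPrimitive 2`. -/
def invariantThreeForm : LatticeForm 6 3 :=
  coordMonomial ![0, 1, 2] - coordMonomial ![0, 1, 3] + coordMonomial ![0, 2, 5] +
    coordMonomial ![1, 2, 3] - coordMonomial ![1, 2, 4] + coordMonomial ![2, 3, 4] -
    coordMonomial ![2, 3, 5] + coordMonomial ![3, 4, 5]

/-- Three functions whose cochains have norms representing six times a basis of the
`holM`-invariant classes of degree `2` of the lattice. -/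
def normPrimitive : Fin 3 → (Fin 2 → Fin 6 → ℤ) → ℤ :=
  ![fun v => 2 * (v 0 2 * v 1 3),
    fun v => 2 * (v 0 0 * v 1 2) + v 0 1 * v 1 3,
    fun v => Ring.choose (v 0 5) 2 * (v 1 5 + v 1 2 - v 1 1) + v 0 3 * v 0 5 * (v 1 5 - v 1 4) +
      v 0 1 * v 0 5 * (v 1 4 - v 1 3 + v 1 2) - v 0 0 * v 0 5 * (v 1 5 + v 1 2 - v 1 1) +
      (v 0 3 + v 0 1 - v 0 0) * Ring.choose (v 1 5) 2 - v 0 3 * v 1 4 * v 1 5 +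
      (v 0 1 - v 0 0) * v 1 2 * v 1 5 + v 0 0 * v 1 1 * v 1 5 - v 0 0 * v 1 1 + v 0 1 * v 1 3]

lemma choose_two_add (x y : ℤ) :
    Ring.choose (x + y) 2 = Ring.choose x 2 + Ring.choose y 2 + x * y := by
  rw [Ring.add_choose_eq 2 (Commute.all x y)]
  rw [Finset.Nat.sum_antidiagonal_eq_sum_range_succ_mk]
  simp only [Finset.sum_range_succ, Finset.sum_range_zero, Ring.choose_zero_right,
    Ring.choose_one_right, Nat.reduceSub]
  ring

lemma wedgePairing_norm_normPrimitive (i k : Fin 3) :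
    wedgePairing (orbit 0) (orbit (k + 1))
      (norm 12 rotation (diffCochain (normPrimitive i) : HomCochain Γ 3)) =
      if k = i then 6 else 0 := by
  simp only [wedgePairing_norm_diffCochain, holM_pow_mulVec_orbit]
  revert i k
  decide +kernel

lemma translate_rotation_form_invariantThreeForm_sub :
    translate (rotation : Γ) (form invariantThreeForm) - form invariantThreeForm =
      d (diffCochain (normPrimitive 2)) := by
  have hform := translate_rotation_pow_form (hq := holM_pow) 1 invariantThreeForm
  rw [pow_one, pow_one] at hform
  rw [d_diffCochain_two, hform, ← map_sub]
  refine (diffCochain_eq_form fun v => ?_).symm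
  simp only [normPrimitive, invariantThreeForm, cons_val, Pi.add_apply, choose_two_add,
    _root_.sub_apply, _root_.add_apply, MultilinearMap.compLinearMap_apply, mulVecBilin_apply,
    holM_mulVec, coordMonomial_apply, Fin.prod_univ_three]
  ring

lemma periodicityRel_zero_norm_normPrimitive (i : Fin 3) :
    PeriodicityRel holonomy rotation 0
      (norm 12 (rotation : Γ) (diffCochain (normPrimitive i))) := by
  fin_cases i
  · convert periodicityRel_zero_norm_form (n := 6) ((2 : ℤ) • coordMonomial ![2, 3])
    refine diffCochain_eq_form fun v => ?_
    simp [normPrimitive, coordMonomial_apply, Fin.prod_univ_two]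
  · convert periodicityRel_zero_norm_form (n := 6)
      ((2 : ℤ) • coordMonomial ![0, 2] + coordMonomial ![1, 3])
    refine diffCochain_eq_form fun v => ?_
    simp [normPrimitive, coordMonomial_apply, Fin.prod_univ_two]
  · exact periodicityRel_zero_norm_diffCochain translate_rotation_form_invariantThreeForm_sub

lemma mem_coboundaries_ker_of_wedgePairing_orbit_eq_zero {z : HomCochain Γ 3}
    (hz : z ∈ invariants ⊤ 3) (hdz : d z = 0)
    (h : ∀ k : Fin 3, wedgePairing (orbit 0) (orbit (k + 1)) z = 0) :
    z ∈ coboundaries (holonomy : Γ →* _).ker 2 := by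
  have hzker := invariants_anti (le_top : (holonomy : Γ →* _).ker ≤ ⊤) hz
  obtain ⟨B, -, hB⟩ := exists_sub_form_mem_coboundaries_two hzker hdz
  have halt : MultilinearMap.alternatization B = 0 := by
    refine eq_zero_of_map_holM_eq (fun a b => ?_) fun k => (hB _ _).symm.trans (h k)
    rw [← hB, ← hB, ← wedgePairing_translate_rotation a b hzker hdz, hz _ trivial]
  refine mem_coboundaries_of_wedgePairing_eq_zero hzker hdz fun a b => ?_
  rw [hB, halt, AlternatingMap.zero_apply]

lemma exists_six_zsmul_sub_mem_coboundaries {y : HomCochain Γ 3}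
    (hy : y ∈ invariants ⊤ 3) (hdy : d y = 0) :
    ∃ z ∈ invariants ⊤ 3, PeriodicityRel holonomy rotation 0 z ∧
      (6 : ℤ) • y - z ∈ coboundaries (holonomy : Γ →* _).ker 2 := by
  let z : HomCochain Γ 3 := ∑ i : Fin 3, wedgePairing (orbit 0) (orbit (i + 1)) y •
    norm 12 rotation (diffCochain (normPrimitive i))
  have hrel : PeriodicityRel holonomy rotation 0 z := by
    have h := PeriodicityRel.sum (s := Finset.univ) fun i _ =>
      (periodicityRel_zero_norm_normPrimitive i).zsmul (wedgePairing (orbit 0) (orbit (i + 1)) y)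
    simpa only [smul_zero, Finset.sum_const_zero] using h
  have hz := hrel.right_mem_invariants holonomy_rotation rotation_pow_card
  refine ⟨z, hz, hrel, mem_coboundaries_ker_of_wedgePairing_orbit_eq_zero
    (sub_mem (zsmul_mem hy 6) hz) ?_ fun k => ?_⟩
  · rw [map_sub, map_zsmul, hdy, hrel.d_right rotation_pow_card, smul_zero, sub_zero]
  · have hwz : wedgePairing (orbit 0) (orbit (k + 1)) z =
        ∑ i : Fin 3, wedgePairing (orbit 0) (orbit (i + 1)) y • if k = i then (6 : ℤ) else 0 := by
      rw [map_sum]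
      refine Finset.sum_congr rfl fun i _ => ?_
      rw [map_zsmul]
      exact congrArg _ (wedgePairing_norm_normPrimitive i k)
    rw [map_sub, map_zsmul, hwz]
    simp [mul_comm]

/-- The matrix `3 (holM - 1)⁻¹`. -/
def threeInvHolMSubOne : Matrix (Fin 6) (Fin 6) ℤ :=
  !![-2, 1, 1, 1, 1, 1; -1, -1, 2, 2, 2, 2; -1, -1, -1, 2, 2, 2; -2, -2, -2, -2, 1, 1;
    -2, -2, -2, -2, -2, 1; -1, -1, -1, -1, -1, -1]

lemma threeInvHolMSubOne_mul : threeInvHolMSubOne * (holM - 1) = (3 : ℤ) • 1 := by decide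

theorem exists_forall_fiftyFour_zsmul_sub_mem_coboundaries :
    ∃ e : HomCochain Γ 5, e ∈ invariants ⊤ 5 ∧ d e = 0 ∧
      ∀ x ∈ invariants ⊤ 5, (4 : ℤ) • x ∈ coboundaries ⊤ 4 →
        ∃ m : ℤ, (54 : ℤ) • x - m • e ∈ coboundaries ⊤ 4 := by
  obtain ⟨e₂, he₂, hde₂, hrel₂⟩ := PeriodicityRel.exists_of_cocycle
    (holonomy_rotation (hq := holM_pow)) one_mem_invariants d_one
  obtain ⟨e₄, he₄, hde₄, hrel₄⟩ :=
    PeriodicityRel.exists_of_cocycle (holonomy_rotation (hq := holM_pow)) he₂ hde₂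
  refine ⟨e₄, he₄, hde₄, fun x hx hx4 => ?_⟩
  obtain ⟨y, hxy⟩ := exists_periodicityRel_three_zsmul hx hx4
  have hy := hxy.right_mem_invariants holonomy_rotation rotation_pow_card
  obtain ⟨z, hz, hrel, hyz⟩ := exists_six_zsmul_sub_mem_coboundaries hy
    (hxy.d_right rotation_pow_card)
  obtain ⟨m, hm⟩ := exists_periodicityRel_zsmul_one threeInvHolMSubOne_mul
    (sub_mem (zsmul_mem hy 6) hz) hyz
  have hcob : (3 : ℤ) • ((6 : ℤ) • y - z) - m • e₂ ∈ coboundaries ⊤ 2 := by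
    refine PeriodicityRel.mem_coboundaries holonomy_rotation (y := 0) ?_ (zero_mem _)
    convert hm.add (hrel₂.zsmul (-m)) using 1
    · rw [neg_smul, sub_eq_add_neg]
    · rw [neg_smul, add_neg_cancel]
  refine ⟨m, PeriodicityRel.mem_coboundaries holonomy_rotation ?_ hcob⟩
  convert ((hxy.zsmul 6).add (hrel.zsmul (-1))).zsmul 3 |>.add (hrel₄.zsmul (-m)) using 1
  · module
  · module

end HomCochain

/-! ### Comparison with group cohomology -/

section CohomologyClass

open CategoryTheory groupCohomology

variable {k G : Type} [CommRing k] [Group G]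

lemma iCocycles_injective (A : Rep k G) (n : ℕ) : Function.Injective (iCocycles A n) :=
  (ModuleCat.mono_iff_injective _).1 inferInstance

/-- Inhomogeneous cocycles of degree `n` with values in `A`. -/
abbrev InhomCocycle (A : Rep k G) (n : ℕ) : Type :=
  LinearMap.ker (inhomogeneousCochains.d A n).hom

/-- The cohomology class of an inhomogeneous cocycle. -/
noncomputable def cohomologyClass (A : Rep k G) (n : ℕ) :
    InhomCocycle A n →ₗ[k] groupCohomology A n :=
  (π A n).hom ∘ₗ
    { toFun := fun f => cocyclesMk f.1 f.2
      map_add' := fun f g => iCocycles_injective A n <| by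
        rw [map_add, iCocycles_mk f.1 f.2, iCocycles_mk g.1 g.2, iCocycles_mk _ (f + g).2]
        rfl
      map_smul' := fun c f => iCocycles_injective A n <| by
        rw [map_smul, iCocycles_mk f.1 f.2, iCocycles_mk _ (c • f).2]
        rfl }

lemma cohomologyClass_apply {A : Rep k G} {n : ℕ}
    (f : InhomCocycle A n) :
    cohomologyClass A n f = π A n (cocyclesMk f.1 f.2) := rfl

lemma cohomologyClass_surjective (A : Rep k G) (n : ℕ) :
    Function.Surjective (cohomologyClass A n) := fun x => by
  induction x using groupCohomology_induction_on with
  | h z =>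
    have hz : inhomogeneousCochains.d A n (iCocycles A n z) = 0 := by
      have h := (inhomogeneousCochains A).iCycles_d n (n + 1)
      rw [inhomogeneousCochains.d_def] at h
      exact ConcreteCategory.congr_hom h z
    exact ⟨⟨_, hz⟩, congrArg (π A n) (iCocycles_injective A n (iCocycles_mk _ hz))⟩

lemma cohomologyClass_eq_zero_iff {A : Rep k G} {n : ℕ}
    {f : InhomCocycle A (n + 1)} :
    cohomologyClass A (n + 1) f = 0 ↔ ∃ g, inhomogeneousCochains.d A n g = f := by
  have hd (g : (inhomogeneousCochains A).X n) :
      iCocycles A (n + 1) (toCocycles A n (n + 1) g) = inhomogeneousCochains.d A n g := by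
    have h := (inhomogeneousCochains A).toCycles_i n (n + 1)
    rw [inhomogeneousCochains.d_def] at h
    exact ConcreteCategory.congr_hom h g
  have hmk (g : (inhomogeneousCochains A).X n) :
      toCocycles A n (n + 1) g = cocyclesMk f.1 f.2 ↔ inhomogeneousCochains.d A n g = f := by
    rw [← hd, ← (iCocycles_injective A (n + 1)).eq_iff, iCocycles_mk _ f.2]
  have hexact := ShortComplex.exact_of_g_is_cokernel (ShortComplex.mk _ _
    ((inhomogeneousCochains A).toCycles_comp_homologyπ n (n + 1)))
    ((inhomogeneousCochains A).homologyIsCokernel n (n + 1) (by simp))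
  rw [ShortComplex.moduleCat_exact_iff] at hexact
  simp_rw [← hmk]
  refine ⟨hexact _, fun ⟨g, hg⟩ => ?_⟩
  rw [cohomologyClass_apply, ← hg]
  exact ConcreteCategory.congr_hom
    ((inhomogeneousCochains A).toCycles_comp_homologyπ n (n + 1)) g

end CohomologyClass

namespace HomCochain

section Comparison

open groupCohomology

/-- Homogeneous cochains in uncurried form. -/
def uncurry {X : Type} : ∀ {n : ℕ}, HomCochain X n ≃+ ((Fin n → X) → ℤ)
  | 0 => (AddEquiv.funUnique (Fin 0 → X) ℤ).symm
  | _ + 1 =>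
    { toFun := fun f v => uncurry (f (v 0)) (Fin.tail v)
      invFun := fun F y => uncurry.symm fun v => F (Fin.cons y v)
      left_inv := fun f => by ext y : 1; exact uncurry.symm_apply_apply (f y)
      right_inv := fun F => by
        ext v; simp only [AddEquiv.apply_symm_apply, Fin.cons_self_tail]
      map_add' := fun f g => by ext v; exact congrFun (map_add uncurry _ _) _ }

lemma uncurry_succ_apply {X : Type} {n : ℕ} (f : HomCochain X (n + 1)) (v : Fin (n + 1) → X) :
    uncurry f v = uncurry (f (v 0)) (Fin.tail v) := rfl

lemma uncurry_d {X : Type} : ∀ {n : ℕ} (f : HomCochain X n) (v : Fin (n + 1) → X),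
    uncurry (d f) v = ∑ j : Fin (n + 1), (-1) ^ (j : ℕ) * uncurry f (v ∘ j.succAbove)
  | 0, f, v => by rw [Fin.sum_univ_one, Fin.val_zero, pow_zero, one_mul]; rfl
  | n + 1, f, v => by
    have htail (j : Fin (n + 1)) : Fin.tail (v ∘ j.succ.succAbove) = Fin.tail v ∘ j.succAbove :=
      funext fun i => congrArg v (Fin.succ_succAbove_succ j i)
    rw [Fin.sum_univ_succ (fun j : Fin (n + 2) => (-1) ^ (j : ℕ) * uncurry f (v ∘ j.succAbove)),
      uncurry_succ_apply, d_apply, map_sub, Pi.sub_apply, uncurry_d, Fin.val_zero, pow_zero,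
      one_mul, sub_eq_add_neg, ← Finset.sum_neg_distrib]
    refine congrArg₂ (· + ·) rfl (Finset.sum_congr rfl fun j _ => ?_)
    rw [uncurry_succ_apply _ (v ∘ j.succ.succAbove), htail, Fin.val_succ, pow_succ, mul_neg_one,
      neg_mul]
    rfl

variable {G : Type} [Group G] {n : ℕ}

lemma uncurry_translate (g : G) : ∀ {n : ℕ} (f : HomCochain G n) (v : Fin n → G),
    uncurry (translate g f) v = uncurry f (g • v)
  | 0, _, _ => rfl
  | _ + 1, f, v => uncurry_translate g (f (g * v 0)) (Fin.tail v)

/-- The restriction of a homogeneous cochain to the arguments `(1, w₀, w₀w₁, …)`. -/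
def dehomogenize : HomCochain G (n + 1) →+ ((Fin n → G) → ℤ) where
  toFun f w := uncurry f (Fin.partialProd w)
  map_zero' := by rw [map_zero]; rfl
  map_add' f g := by rw [map_add]; rfl

lemma dehomogenize_apply (f : HomCochain G (n + 1)) (w : Fin n → G) :
    dehomogenize f w = uncurry f (Fin.partialProd w) := rfl

lemma dehomogenize_d {f : HomCochain G (n + 1)} (hf : f ∈ invariants ⊤ (n + 1)) :
    dehomogenize (d f) = inhomogeneousCochains.d (Rep.trivial ℤ G ℤ) n (dehomogenize f) := by
  ext w
  have hzero : Fin.partialProd w ∘ (0 : Fin (n + 2)).succAbove =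
      w 0 • Fin.partialProd (Fin.tail w) := by
    ext j
    exact Fin.partialProd_succ' w j
  rw [dehomogenize_apply, uncurry_d, Fin.sum_univ_succ, hzero, ← uncurry_translate,
    hf _ trivial, Fin.val_zero, pow_zero, one_mul, inhomogeneousCochains.d_hom_apply]
  simp only [← Fin.partialProd_contractNth, Fin.val_succ]
  rfl

lemma dehomogenize_injOn : Set.InjOn dehomogenize
    (invariants (⊤ : Subgroup G) (n + 1) : Set (HomCochain G (n + 1))) := by
  intro f hf g hg h
  refine uncurry.injective (funext fun v => ?_)
  rw [← Fin.partialProd_left_inv v, ← uncurry_translate, ← uncurry_translate, hf _ trivial,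
    hg _ trivial]
  exact congrFun h _

lemma exists_dehomogenize_eq (F : (Fin n → G) → ℤ) :
    ∃ f ∈ invariants (⊤ : Subgroup G) (n + 1), dehomogenize f = F := by
  refine ⟨uncurry.symm fun v => F fun i => (v i.castSucc)⁻¹ * v i.succ, fun g _ => ?_, ?_⟩
  · refine uncurry.injective (funext fun v => ?_)
    simp only [uncurry_translate, AddEquiv.apply_symm_apply, Pi.smul_apply, smul_eq_mul,
      _root_.mul_inv_rev, mul_assoc, inv_mul_cancel_left]
  · ext w
    simp only [dehomogenize_apply, AddEquiv.apply_symm_apply, Fin.partialProd_right_inv]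

/-- The cocycles of degree `n` in the complex of invariant cochains. -/
def cocycles (G : Type) [Group G] (n : ℕ) : AddSubgroup (HomCochain G (n + 1)) :=
  invariants ⊤ (n + 1) ⊓ d.ker

/-- The cohomology class of an invariant homogeneous cocycle. -/
noncomputable def toGroupCohomology (G : Type) [Group G] (n : ℕ) :
    cocycles G n →+ groupCohomology (Rep.trivial ℤ G ℤ) n :=
  (cohomologyClass (Rep.trivial ℤ G ℤ) n).toAddMonoidHom.comp
    { toFun := fun f => ⟨dehomogenize f.1, by
        exact (dehomogenize_d f.2.1).symm.trans ((congrArg _ f.2.2).trans (map_zero _))⟩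
      map_zero' := Subtype.ext (map_zero dehomogenize)
      map_add' := fun f g => Subtype.ext (map_add dehomogenize f.1 g.1) }

lemma toGroupCohomology_surjective (G : Type) [Group G] (n : ℕ) :
    Function.Surjective (toGroupCohomology G n) := fun x => by
  obtain ⟨⟨F, hF⟩, rfl⟩ := cohomologyClass_surjective _ n x
  obtain ⟨f, hf, rfl⟩ := exists_dehomogenize_eq F
  have hdf : d f = 0 := dehomogenize_injOn (d_mem_invariants hf) (zero_mem _) <|
    (dehomogenize_d hf).trans (LinearMap.mem_ker.1 hF |>.trans (map_zero _).symm)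
  exact ⟨⟨f, hf, hdf⟩, rfl⟩

lemma toGroupCohomology_eq_zero_iff {f : cocycles G (n + 1)} :
    toGroupCohomology G (n + 1) f = 0 ↔ (f : HomCochain G (n + 2)) ∈ coboundaries ⊤ (n + 1) := by
  refine cohomologyClass_eq_zero_iff.trans ⟨fun ⟨F, hF⟩ => ?_, fun ⟨g, hg, hgf⟩ => ?_⟩
  · obtain ⟨g, hg, rfl⟩ := exists_dehomogenize_eq F
    exact ⟨g, hg, dehomogenize_injOn (d_mem_invariants hg) f.2.1 ((dehomogenize_d hg).trans hF)⟩
  · exact ⟨dehomogenize g, (dehomogenize_d hg).symm.trans (congrArg _ hgf)⟩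

end Comparison

end HomCochain

open HomCochain in
theorem exists_forall_two_nsmul_mem_zmultiples :
    ∃ e : H 4, ∀ x : H 4, 4 • x = 0 → 2 • x ∈ AddSubgroup.zmultiples e := by
  obtain ⟨e, he, hde, hall⟩ := exists_forall_fiftyFour_zsmul_sub_mem_coboundaries
  refine ⟨toGroupCohomology _ 4 ⟨e, he, hde⟩, fun x hx => ?_⟩
  obtain ⟨x, rfl⟩ := toGroupCohomology_surjective _ 4 x
  have hx4 : (4 : ℤ) • toGroupCohomology _ 4 x = 0 := (ofNat_zsmul _ 4).trans hx
  have hx54 : (54 : ℤ) • toGroupCohomology _ 4 x = 2 • toGroupCohomology _ 4 x := by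
    rw [show (54 : ℤ) = 13 * 4 + 2 by norm_num, add_zsmul, mul_zsmul, hx4, zsmul_zero, zero_add,
      ofNat_zsmul]
  rw [← map_zsmul, toGroupCohomology_eq_zero_iff] at hx4
  obtain ⟨m, hm⟩ := hall x x.2.1 hx4
  refine ⟨m, (sub_eq_zero.1 ?_).symm.trans hx54⟩
  beta_reduce
  rw [← map_zsmul, ← map_zsmul, ← map_sub, toGroupCohomology_eq_zero_iff]
  exact hm

/-! ### Cohomology of finite cyclic groups -/

open CategoryTheory in
theorem exists_nsmul_eq_zero_and_nsmul_ne_zero {k G : Type} [CommRing k] [CommGroup G] [Fintype G]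
    (A : Rep k G) {g : G} (hg : ∀ h, h ∈ Subgroup.zpowers g) {i : ℕ} [NeZero i] (hi : Even i)
    {a b m : ℕ} (hcard : Fintype.card G = a * m) {x : A} (hx : A.ρ g x = x)
    (hnorm : ∀ y, ∑ h, A.ρ h y ≠ (b * m) • x) :
    ∃ u : groupCohomology A i, a • u = 0 ∧ b • u ≠ 0 := by
  have hall (h : G) : A.ρ h x = x := by
    obtain ⟨l, rfl⟩ := mem_powers_iff_mem_zpowers.2 (hg h)
    induction l with
    | zero => simp
    | succ l ih =>
      beta_reduce at ih ⊢
      rw [pow_succ, map_mul, Module.End.mul_apply, hx, ih]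
  have hmem : m • x ∈ LinearMap.ker (A.applyAsHom g - 𝟙 A).hom.toLinearMap :=
    nsmul_mem (sub_eq_zero.2 hx) m
  refine ⟨Rep.FiniteCyclicGroup.groupCohomologyπEven A g hg i hi ⟨m • x, hmem⟩, ?_, fun h => ?_⟩
  · rw [← map_nsmul, Rep.FiniteCyclicGroup.groupCohomologyπEven_eq_zero_iff]
    refine ⟨x, ?_⟩
    change A.ρ.norm x = a • m • x
    rw [Representation.norm, LinearMap.sum_apply, Finset.sum_congr rfl fun h _ => hall h,
      Finset.sum_const, Finset.card_univ, hcard, mul_smul]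
  · rw [← map_nsmul, Rep.FiniteCyclicGroup.groupCohomologyπEven_eq_zero_iff] at h
    obtain ⟨y, hy⟩ := h
    exact hnorm y ((LinearMap.sum_apply _ _ y).symm.trans (hy.trans (mul_smul b m x).symm))

lemma forall_mem_zpowers_ofAdd_neg_one (q : ℕ) [NeZero q] (g : Multiplicative (ZMod q)) :
    g ∈ Subgroup.zpowers (Multiplicative.ofAdd (-1 : ZMod q)) := by
  refine ⟨-(g.toAdd.val : ℤ), ?_⟩
  beta_reduce
  rw [← ofAdd_zsmul]
  simp

/-! ### The action on the cohomology of the lattice -/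

section cohRep

open CategoryTheory groupCohomology

variable {k G L V : Type} [CommRing k] [Group G] [Group L] [AddCommGroup V] [Module k V]
  (φ : G →* MulAut L) (ψ : Representation k G V) {j : ℕ}

/-- The action of `G` on inhomogeneous cocycles which induces the representation `cohRep φ ψ`. -/
noncomputable def cocycleAction (g : G) : InhomCocycle (Rep.trivial k L V) j →ₗ[k]
    InhomCocycle (Rep.trivial k L V) j :=
  ((cochainsMap (Rep.trivial k L V) (Rep.trivial k L V) (φ g⁻¹).toMonoidHom (ψ g)
    fun _ _ => rfl).f j).hom.restrict fun f hf => by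
      have h := (cochainsMap (Rep.trivial k L V) (Rep.trivial k L V) (φ g⁻¹).toMonoidHom (ψ g)
        fun _ _ => rfl).comm j (j + 1)
      rw [inhomogeneousCochains.d_def] at h
      refine (ConcreteCategory.congr_hom h f).trans ?_
      refine (congrArg ((cochainsMap (Rep.trivial k L V) (Rep.trivial k L V)
        (φ g⁻¹).toMonoidHom (ψ g) fun _ _ => rfl).f (j + 1)) (LinearMap.mem_ker.1 hf)).trans ?_
      exact map_zero _

lemma cohRep_ρ_cohomologyClass (g : G)
    (f : InhomCocycle (Rep.trivial k L V) j) :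
    (cohRep φ ψ j).ρ g (cohomologyClass _ j f) =
      cohomologyClass (Rep.trivial k L V) j (cocycleAction φ ψ g f) := by
  let c := cochainsMap (Rep.trivial k L V) (Rep.trivial k L V) (φ g⁻¹).toMonoidHom (ψ g)
    fun _ _ => rfl
  refine (ConcreteCategory.congr_hom (HomologicalComplex.homologyπ_naturality c j)
    (cocyclesMk f.1 f.2)).trans (congrArg (π _ j) (iCocycles_injective _ j ?_))
  refine (ConcreteCategory.congr_hom (HomologicalComplex.cyclesMap_i c j)
    (cocyclesMk f.1 f.2)).trans ?_
  refine (congrArg (c.f j) (iCocycles_mk f.1 f.2)).trans ?_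
  exact (iCocycles_mk _ (cocycleAction φ ψ g f).2).symm

lemma sum_cohRep_ρ_cohomologyClass [Fintype G]
    (f : InhomCocycle (Rep.trivial k L V) j) :
    ∑ g, (cohRep φ ψ j).ρ g (cohomologyClass _ j f) =
      cohomologyClass (Rep.trivial k L V) j (∑ g, cocycleAction φ ψ g f) :=
  (Finset.sum_congr rfl fun g _ => cohRep_ρ_cohomologyClass φ ψ g f).trans (map_sum _ _ _).symm

end cohRep

section DegreeZero

open CategoryTheory groupCohomology

lemma cohomologyClass_zero_injective {k G : Type} [CommRing k] [Group G] (A : Rep k G) :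
    Function.Injective (cohomologyClass A 0) := fun f g h => by
  have : IsIso (π A 0) := CochainComplex.isIso_homologyπ₀ _
  have hcocycle :=
    congrArg (iCocycles A 0) ((ModuleCat.mono_iff_injective (π A 0)).1 inferInstance h)
  exact Subtype.ext ((iCocycles_mk f.1 f.2).symm.trans (hcocycle.trans (iCocycles_mk g.1 g.2)))

variable {k G L V : Type} [CommRing k] [Group L] [AddCommGroup V] [Module k V]

lemma inhomogeneousCochains_d_zero_trivial (f : (Fin 0 → L) → V) :
    inhomogeneousCochains.d (Rep.trivial k L V) 0 f = 0 := by
  ext v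
  refine (inhomogeneousCochains.d_hom_apply (Rep.trivial k L V) 0 f v).trans ?_
  rw [Fin.sum_univ_one, Subsingleton.elim (fun i : Fin 0 => v i.succ) ![],
    Subsingleton.elim (Fin.contractNth (0 : Fin 1) (· * ·) v) ![]]
  change f ![] + (-1 : k) ^ (0 + 1) • f ![] = 0
  rw [zero_add, pow_one, neg_one_smul, add_neg_cancel]

lemma cocycleAction_one_zero [Group G] (φ : G →* MulAut L) (g : G)
    (f : InhomCocycle (Rep.trivial k L V) 0) :
    cocycleAction φ (1 : Representation k G V) g f = f :=
  Subtype.ext (funext fun _ => congrArg f.1 (Subsingleton.elim _ _))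

lemma cohRep_one_zero_ρ_apply [Group G] (φ : G →* MulAut L) (g : G)
    (x : cohRep φ (1 : Representation k G V) 0) :
    (cohRep φ (1 : Representation k G V) 0).ρ g x = x := by
  obtain ⟨f, rfl⟩ := cohomologyClass_surjective _ 0 x
  exact (cohRep_ρ_cohomologyClass φ 1 g f).trans (congrArg _ (cocycleAction_one_zero φ g f))

end DegreeZero

open groupCohomology in
theorem exists_four_nsmul_eq_zero_Hc_four_zero : ∃ u : Hc 4 0, 4 • u = 0 ∧ 2 • u ≠ 0 := by
  let f : InhomCocycle (Rep.trivial ℤ (Lat 6) ℤ) 0 :=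
    ⟨fun _ => (1 : ℤ), inhomogeneousCochains_d_zero_trivial _⟩
  refine exists_nsmul_eq_zero_and_nsmul_ne_zero (m := 3) _ (forall_mem_zpowers_ofAdd_neg_one 12)
    (by decide) rfl (x := cohomologyClass _ 0 f) (cohRep_one_zero_ρ_apply _ _ _) fun y hy => ?_
  obtain ⟨h, rfl⟩ := cohomologyClass_surjective _ 0 y
  rw [sum_cohRep_ρ_cohomologyClass] at hy
  have heq := congrFun (congrArg Subtype.val
    (cohomologyClass_zero_injective _ (hy.trans (map_nsmul _ 6 f).symm))) ![]
  simp only [cocycleAction_one_zero, Finset.sum_const] at heq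
  have hne (c : ℤ) : 12 • c ≠ 6 • 1 := by
    rw [nsmul_eq_mul, nsmul_eq_mul]
    omega
  exact hne _ heq

section

open groupCohomology

lemma inhomogeneousCochains_d_one_trivial {G : Type} [Group G] (f : (Fin 1 → G) → ℤ)
    (v : Fin 2 → G) : (inhomogeneousCochains.d (Rep.trivial ℤ G ℤ) 1 f v : ℤ) =
      f ![v 1] - f ![v 0 * v 1] + f ![v 0] := by
  refine (inhomogeneousCochains.d_hom_apply (Rep.trivial ℤ G ℤ) 1 f v).trans ?_
  have h0 : (fun i : Fin 1 => v i.succ) = ![v 1] := by ext i; fin_cases i; rfl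
  have h1 : Fin.contractNth (0 : Fin 2) (· * ·) v = ![v 0 * v 1] := by ext i; fin_cases i; rfl
  have h2 : Fin.contractNth (1 : Fin 2) (· * ·) v = ![v 0] := by ext i; fin_cases i; rfl
  rw [Fin.sum_univ_two, h0, h1, h2]
  change f ![v 1] + ((-1) ^ (0 + 1) * f ![v 0 * v 1] + (-1) ^ (1 + 1) * f ![v 0]) = _
  ring

lemma inhomogeneousCochains_d_two_trivial {G : Type} [Group G] (f : (Fin 2 → G) → ℤ)
    (v : Fin 3 → G) : (inhomogeneousCochains.d (Rep.trivial ℤ G ℤ) 2 f v : ℤ) =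
      f ![v 1, v 2] - f ![v 0 * v 1, v 2] + f ![v 0, v 1 * v 2] - f ![v 0, v 1] := by
  refine (inhomogeneousCochains.d_hom_apply (Rep.trivial ℤ G ℤ) 2 f v).trans ?_
  have h0 : (fun i : Fin 2 => v i.succ) = ![v 1, v 2] := by ext i; fin_cases i <;> rfl
  have h1 : Fin.contractNth (0 : Fin 3) (· * ·) v = ![v 0 * v 1, v 2] := by
    ext i; fin_cases i <;> rfl
  have h2 : Fin.contractNth (1 : Fin 3) (· * ·) v = ![v 0, v 1 * v 2] := by
    ext i; fin_cases i <;> rfl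
  have h3 : Fin.contractNth (2 : Fin 3) (· * ·) v = ![v 0, v 1] := by
    ext i; fin_cases i <;> rfl
  rw [Fin.sum_univ_three, h0, h1, h2, h3]
  change f ![v 1, v 2] + ((-1) ^ (0 + 1) * f ![v 0 * v 1, v 2] +
    (-1) ^ (1 + 1) * f ![v 0, v 1 * v 2] + (-1) ^ (2 + 1) * f ![v 0, v 1]) = _
  ring

/-- The antisymmetrization of the value of a `2`-cochain at a pair of elements. On cocycles of a
commutative group it depends only on the cohomology class. -/
def antisymmetrize {G : Type} (a b : G) : ((Fin 2 → G) → ℤ) →+ ℤ where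
  toFun f := f ![a, b] - f ![b, a]
  map_zero' := sub_self 0
  map_add' _ _ := add_sub_add_comm _ _ _ _

lemma antisymmetrize_apply {G : Type} (a b : G) (f : (Fin 2 → G) → ℤ) :
    antisymmetrize a b f = f ![a, b] - f ![b, a] := rfl

lemma antisymmetrize_eq_of_cohomologyClass_eq {G : Type} [Group G]
    {f f' : InhomCocycle (Rep.trivial ℤ G ℤ) 2}
    (h : cohomologyClass _ 2 f = cohomologyClass _ 2 f') {a b : G} (hab : Commute a b) :
    antisymmetrize a b f.1 = antisymmetrize a b f'.1 := by
  rw [← sub_eq_zero, ← map_sub, cohomologyClass_eq_zero_iff] at h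
  obtain ⟨p, hp⟩ := h
  refine sub_eq_zero.1 ((map_sub (antisymmetrize a b) _ _).symm.trans ?_)
  refine (congrArg (antisymmetrize a b) hp.symm).trans ?_
  rw [antisymmetrize_apply, inhomogeneousCochains_d_one_trivial,
    inhomogeneousCochains_d_one_trivial]
  change p ![b] - p ![a * b] + p ![a] - (p ![a] - p ![b * a] + p ![b]) = (0 : ℤ)
  rw [hab.eq]
  ring

open HomCochain in
lemma exists_antisymmetrize_eq_alternatization {n : ℕ}
    (f : InhomCocycle (Rep.trivial ℤ (Lat n) ℤ) 2) :
    ∃ B : LatticeForm n 2, ∀ a b, antisymmetrize (Multiplicative.ofAdd a)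
      (Multiplicative.ofAdd b) f.1 = MultilinearMap.alternatization B ![a, b] := by
  let F : (Fin 2 → Fin n → ℤ) → ℤ := f.1
  have hd : d (diffCochain F : HomCochain (Crys 1 1 (one_pow 1)) 3) = 0 := by
    rw [d_diffCochain_two]
    refine (congrArg diffCochain (funext fun v => ?_)).trans (map_zero diffCochain)
    exact (inhomogeneousCochains_d_two_trivial (G := Lat n) f.1 v).symm.trans
      (congrFun (LinearMap.mem_ker.1 f.2) v)
  obtain ⟨B, -, hB⟩ := exists_sub_form_mem_coboundaries_two (diffCochain_mem_invariants F) hd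
  exact ⟨B, fun a b => (wedgePairing_diffCochain a b F).symm.trans (hB a b)⟩

lemma matAction_apply {n q : ℕ} [NeZero q] {M : Matrix (Fin n) (Fin n) ℤ} (hq : M ^ q = 1)
    (g : Multiplicative (ZMod q)) (v : Lat n) :
    matAction q M hq g v = Multiplicative.ofAdd ((M ^ g.toAdd.val) *ᵥ v.toAdd) := by
  change ((_ : MulAut (Lat n)) ^ g.toAdd.val) v = _
  generalize g.toAdd.val = m
  induction m with
  | zero => simp
  | succ m ih =>
    rw [pow_succ', MulAut.mul_apply, ih, pow_succ', ← mulVec_mulVec]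
    rfl

lemma sum_toAdd_val {q : ℕ} [NeZero q] (F : ℕ → ℤ) :
    ∑ g : Multiplicative (ZMod q), F g.toAdd.val = ∑ m ∈ Finset.range q, F m :=
  Finset.sum_nbij' (fun g => g.toAdd.val) (fun m => Multiplicative.ofAdd (m : ZMod q))
    (fun g _ => Finset.mem_range.2 (ZMod.val_lt _)) (fun _ _ => Finset.mem_univ _)
    (fun g _ => by simp) (fun m hm => by simp [ZMod.val_cast_of_lt (Finset.mem_range.1 hm)])
    fun _ _ => rfl

lemma antisymmetrize_cocycleAction {n q : ℕ} [NeZero q] {M : Matrix (Fin n) (Fin n) ℤ}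
    (hq : M ^ q = 1) (g : Multiplicative (ZMod q)) (a b : Fin n → ℤ)
    (f : InhomCocycle (Rep.trivial ℤ (Lat n) ℤ) 2) :
    antisymmetrize (Multiplicative.ofAdd a) (Multiplicative.ofAdd b)
      (cocycleAction (matAction q M hq) 1 g f).1 =
      antisymmetrize (Multiplicative.ofAdd ((M ^ g⁻¹.toAdd.val) *ᵥ a))
        (Multiplicative.ofAdd ((M ^ g⁻¹.toAdd.val) *ᵥ b)) f.1 := by
  have hcomp (c e : Fin n → ℤ) :
      (fun i => matAction q M hq g⁻¹ (![Multiplicative.ofAdd c, Multiplicative.ofAdd e] i)) =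
        ![Multiplicative.ofAdd ((M ^ g⁻¹.toAdd.val) *ᵥ c),
          Multiplicative.ofAdd ((M ^ g⁻¹.toAdd.val) *ᵥ e)] := by
    ext i : 1; fin_cases i <;> exact matAction_apply hq _ _
  exact congrArg₂ (fun v w => (f.1 v : ℤ) - (f.1 w : ℤ)) (hcomp a b) (hcomp b a)

lemma antisymmetrize_sum_cocycleAction {n q : ℕ} [NeZero q] {M : Matrix (Fin n) (Fin n) ℤ}
    (hq : M ^ q = 1) (a b : Fin n → ℤ)
    (f : InhomCocycle (Rep.trivial ℤ (Lat n) ℤ) 2) :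
    antisymmetrize (Multiplicative.ofAdd a) (Multiplicative.ofAdd b)
      (∑ g, cocycleAction (matAction q M hq) 1 g f).1 =
      ∑ m ∈ Finset.range q, antisymmetrize (Multiplicative.ofAdd ((M ^ m) *ᵥ a))
        (Multiplicative.ofAdd ((M ^ m) *ᵥ b)) f.1 := by
  rw [← sum_toAdd_val (q := q), AddSubmonoidClass.coe_finsetSum]
  refine (map_sum (antisymmetrize _ _) _ _).trans ?_
  refine (Finset.sum_congr rfl fun g _ => antisymmetrize_cocycleAction hq g a b f).trans ?_
  exact Equiv.sum_comp (Equiv.inv _) fun g : Multiplicative (ZMod q) =>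
    antisymmetrize (Multiplicative.ofAdd ((M ^ g.toAdd.val) *ᵥ a))
      (Multiplicative.ofAdd ((M ^ g.toAdd.val) *ᵥ b)) f.1

open HomCochain

/-- The inhomogeneous cocycle of degree `2` defined by a bilinear form. -/
def formCocycle {n : ℕ} (B : LatticeForm n 2) :
    InhomCocycle (Rep.trivial ℤ (Lat n) ℤ) 2 :=
  ⟨fun v => B fun i => (v i).toAdd, by
    ext v
    refine (inhomogeneousCochains_d_two_trivial (G := Lat n) _ v).trans ?_
    let a (i : Fin 3) : Fin n → ℤ := (v i).toAdd
    change B ![a 1, a 2] - B ![a 0 + a 1, a 2] + B ![a 0, a 1 + a 2] - B ![a 0, a 1] = 0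
    rw [map_vecCons_add, map_vecCons_vecCons_add]
    ring⟩

lemma antisymmetrize_formCocycle {n : ℕ} (B : LatticeForm n 2) (a b : Fin n → ℤ) :
    antisymmetrize (Multiplicative.ofAdd a) (Multiplicative.ofAdd b) (formCocycle B).1 =
      B ![a, b] - B ![b, a] := rfl

/-- A bilinear form which represents a `holM`-invariant class of degree `2` of the lattice. -/
def invariantTwoForm : LatticeForm 6 2 :=
  coordMonomial ![0, 3] - coordMonomial ![0, 4] + coordMonomial ![0, 5] + coordMonomial ![1, 4] -
    coordMonomial ![1, 5] + coordMonomial ![2, 5]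

lemma invariantTwoForm_apply (v : Fin 2 → Fin 6 → ℤ) :
    invariantTwoForm v = v 0 0 * v 1 3 - v 0 0 * v 1 4 + v 0 0 * v 1 5 + v 0 1 * v 1 4 -
      v 0 1 * v 1 5 + v 0 2 * v 1 5 := by
  simp [invariantTwoForm, coordMonomial_apply, Fin.prod_univ_two]

lemma cohRep_ρ_cohomologyClass_invariantTwoForm :
    (cohRep (matAction 12 holM holM_pow) (1 : Representation ℤ _ ℤ) 2).ρ
      (Multiplicative.ofAdd (-1)) (cohomologyClass _ 2 (formCocycle invariantTwoForm)) =
      cohomologyClass (Rep.trivial ℤ (Lat 6) ℤ) 2 (formCocycle invariantTwoForm) := by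
  rw [cohRep_ρ_cohomologyClass]
  refine sub_eq_zero.1 ((map_sub _ _ _).symm.trans (cohomologyClass_eq_zero_iff.2
    ⟨fun v => ((v 0).toAdd 2 * (v 0).toAdd 5 + Ring.choose ((v 0).toAdd 5) 2 : ℤ),
      funext fun v => (inhomogeneousCochains_d_one_trivial (G := Lat 6) _ v).trans ?_⟩))
  let a (i : Fin 2) : Fin 6 → ℤ := (v i).toAdd
  have hact : (cocycleAction (matAction 12 holM holM_pow) (1 : Representation ℤ _ ℤ)
      (Multiplicative.ofAdd (-1)) (formCocycle invariantTwoForm)).1 v =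
        invariantTwoForm fun i => holM *ᵥ a i :=
    congrArg invariantTwoForm (funext fun i => matAction_ofAdd_one holM_pow (v i))
  change (a 1 2 * a 1 5 + Ring.choose (a 1 5) 2) -
    ((a 0 + a 1) 2 * (a 0 + a 1) 5 + Ring.choose ((a 0 + a 1) 5) 2) +
    (a 0 2 * a 0 5 + Ring.choose (a 0 5) 2) =
      (cocycleAction (matAction 12 holM holM_pow) (1 : Representation ℤ _ ℤ)
        (Multiplicative.ofAdd (-1)) (formCocycle invariantTwoForm)).1 v - invariantTwoForm a
  rw [hact, invariantTwoForm_apply, invariantTwoForm_apply, Pi.add_apply, Pi.add_apply,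
    choose_two_add]
  simp only [holM_mulVec, cons_val]
  ring

lemma four_dvd_sum_alternatization_orbit (B : LatticeForm 6 2) :
    4 ∣ ∑ m ∈ Finset.range 12, MultilinearMap.alternatization B ![orbit m, orbit (3 + m)] +
      2 * ∑ m ∈ Finset.range 12, MultilinearMap.alternatization B ![orbit m, orbit (2 + m)] := by
  have table : ∀ i j : Fin 6, 4 ∣
      ∑ m ∈ Finset.range 12, (orbit m i * orbit (3 + m) j - orbit m j * orbit (3 + m) i) +
        2 * ∑ m ∈ Finset.range 12,
          (orbit m i * orbit (2 + m) j - orbit m j * orbit (2 + m) i) := by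
    decide +kernel
  simp only [alternatization_apply_eq_sum_det, det_fin_two]
  rw [Finset.sum_comm, Finset.sum_comm (s := Finset.range 12)]
  simp only [← Finset.sum_mul, Finset.mul_sum Finset.univ, ← mul_assoc, ← Finset.sum_add_distrib,
    ← add_mul]
  exact Finset.dvd_sum fun a _ => (table (a 0) (a 1)).mul_right _

lemma exists_sum_alternatization_eq_of_sum_cohRep_ρ_eq {n q : ℕ} [NeZero q]
    {M : Matrix (Fin n) (Fin n) ℤ} (hq : M ^ q = 1) {A : LatticeForm n 2} {N : ℕ}
    {x y : cohRep (matAction q M hq) (1 : Representation ℤ _ ℤ) 2}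
    (hx : x = cohomologyClass _ 2 (formCocycle A))
    (hy : ∑ g, (cohRep (matAction q M hq) (1 : Representation ℤ _ ℤ) 2).ρ g y = N • x) :
    ∃ B : LatticeForm n 2, ∀ a b : Fin n → ℤ,
      ∑ m ∈ Finset.range q, MultilinearMap.alternatization B ![(M ^ m) *ᵥ a, (M ^ m) *ᵥ b] =
        N * (A ![a, b] - A ![b, a]) := by
  obtain ⟨f, rfl⟩ := cohomologyClass_surjective _ 2 y
  obtain ⟨B, hB⟩ := exists_antisymmetrize_eq_alternatization f
  rw [sum_cohRep_ρ_cohomologyClass, hx] at hy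
  refine ⟨B, fun a b => ?_⟩
  have hab := antisymmetrize_eq_of_cohomologyClass_eq (hy.trans (map_nsmul _ N _).symm)
    (Commute.all (Multiplicative.ofAdd a) (Multiplicative.ofAdd b))
  simp only [← hB]
  refine (antisymmetrize_sum_cocycleAction hq a b f).symm.trans (hab.trans ?_)
  refine (map_nsmul (antisymmetrize _ _) N _).trans ?_
  rw [antisymmetrize_formCocycle, nsmul_eq_mul]

theorem exists_four_nsmul_eq_zero_Hc_two_two : ∃ u : Hc 2 2, 4 • u = 0 ∧ 2 • u ≠ 0 := by
  refine exists_nsmul_eq_zero_and_nsmul_ne_zero (m := 3) _ (forall_mem_zpowers_ofAdd_neg_one 12)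
    (by decide) rfl cohRep_ρ_cohomologyClass_invariantTwoForm fun y hy => ?_
  obtain ⟨B, hB⟩ := exists_sum_alternatization_eq_of_sum_cohRep_ρ_eq holM_pow (N := 6) rfl hy
  have hsum (k : ℕ) : ∑ m ∈ Finset.range 12,
      MultilinearMap.alternatization B ![orbit m, orbit (k + m)] =
        6 * (invariantTwoForm ![orbit 0, orbit k] - invariantTwoForm ![orbit k, orbit 0]) := by
    simpa only [holM_pow_mulVec_orbit, zero_add, Nat.cast_ofNat] using hB (orbit 0) (orbit k)
  have h4 := four_dvd_sum_alternatization_orbit B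
  simp only [hsum, invariantTwoForm_apply] at h4
  revert h4
  decide

end

lemma zsmul_eq_zero_or_eq_self_of_two_nsmul_eq_zero {X : Type*} [AddCommGroup X] {x : X}
    (hx : 2 • x = 0) (n : ℤ) : n • x = 0 ∨ n • x = x := by
  rw [← natCast_zsmul] at hx
  obtain ⟨m, rfl | rfl⟩ := Int.even_or_odd' n
  · exact Or.inl (by rw [mul_comm, mul_smul]; exact (congrArg _ hx).trans (smul_zero m))
  · right
    rw [add_smul, one_smul, mul_comm, mul_smul, add_eq_right]
    exact (congrArg _ hx).trans (smul_zero m)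

lemma add_eq_zero_of_mem_zmultiples_of_two_nsmul_eq_zero {X : Type*} [AddCommGroup X] {e a b : X}
    (ha : a ∈ AddSubgroup.zmultiples e) (hb : b ∈ AddSubgroup.zmultiples e) (ha2 : 2 • a = 0)
    (hb2 : 2 • b = 0) (ha0 : a ≠ 0) (hb0 : b ≠ 0) : a + b = 0 := by
  obtain ⟨s, rfl⟩ := ha
  obtain ⟨t, rfl⟩ := hb
  beta_reduce at *
  have hgcd : ((s.gcd t : ℤ)) • e = s.gcdA t • s • e + s.gcdB t • t • e := by
    rw [Int.gcd_eq_gcd_ab, add_smul, smul_smul, smul_smul, mul_comm s, mul_comm t]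
  have hgcd2 : 2 • ((s.gcd t : ℤ)) • e = 0 := by
    rw [hgcd, smul_add, smul_comm, ha2, smul_comm, hb2, smul_zero, smul_zero, add_zero]
  have hgen {r : ℤ} (hr : (s.gcd t : ℤ) ∣ r) (hr0 : r • e ≠ 0) : r • e = (s.gcd t : ℤ) • e := by
    obtain ⟨c, rfl⟩ := hr
    rw [mul_comm, mul_smul] at hr0 ⊢
    exact (zsmul_eq_zero_or_eq_self_of_two_nsmul_eq_zero hgcd2 c).resolve_left hr0
  rw [hgen (Int.gcd_dvd_left s t) ha0, hgen (Int.gcd_dvd_right s t) hb0, ← two_nsmul, hgcd2]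

theorem isEmpty_addEquiv_pi {X ι : Type*} {Y : ι → Type*} [AddCommGroup X]
    [∀ i, AddCommGroup (Y i)] (hX : ∃ e : X, ∀ x : X, 4 • x = 0 → 2 • x ∈ AddSubgroup.zmultiples e)
    {p q : ι} (hpq : p ≠ q) (hp : ∃ u : Y p, 4 • u = 0 ∧ 2 • u ≠ 0)
    (hq : ∃ v : Y q, 4 • v = 0 ∧ 2 • v ≠ 0) : IsEmpty (X ≃+ ∀ i, Y i) := by
  classical
  refine ⟨fun φ => ?_⟩
  obtain ⟨e, he⟩ := hX
  obtain ⟨u, hu4, hu2⟩ := hp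
  obtain ⟨v, hv4, hv2⟩ := hq
  let incl (i : ι) : Y i →+ X := φ.symm.toAddMonoidHom.comp (AddMonoidHom.single Y i)
  have hinj (i : ι) : Function.Injective (incl i) := φ.symm.injective.comp (Pi.single_injective i)
  have hmem {i : ι} {w : Y i} (hw : 4 • w = 0) : 2 • incl i w ∈ AddSubgroup.zmultiples e :=
    he _ (by rw [← map_nsmul, hw, map_zero])
  have htwo {i : ι} {w : Y i} (hw : 4 • w = 0) : 2 • 2 • incl i w = 0 := by
    rw [smul_smul, ← map_nsmul]
    exact (congrArg _ hw).trans (map_zero _)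
  have hne {i : ι} {w : Y i} (hw : 2 • w ≠ 0) : 2 • incl i w ≠ 0 := by
    rw [← map_nsmul]
    exact (map_ne_zero_iff _ (hinj i)).2 hw
  have hsum := add_eq_zero_of_mem_zmultiples_of_two_nsmul_eq_zero (hmem hu4) (hmem hv4)
    (htwo hu4) (htwo hv4) (hne hu2) (hne hv2)
  have hcoord := congrFun (congrArg φ hsum) p
  simp only [incl, AddMonoidHom.comp_apply, AddEquiv.coe_toAddMonoidHom, map_add, map_nsmul,
    AddEquiv.apply_symm_apply, AddMonoidHom.single_apply, Pi.add_apply, Pi.smul_apply,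
    Pi.single_eq_same, Pi.single_eq_of_ne hpq, smul_zero, add_zero, map_zero,
    Pi.zero_apply] at hcoord
  exact hu2 hcoord

end Crystal

theorem Z12_example_fails_conjecture :
    ∃ k : ℕ, ¬ Nonempty
      (H k ≃+ ((p : {p : ℕ × ℕ // p.1 + p.2 = k}) → Hc p.1.1 p.1.2)) := by
  refine ⟨4, not_nonempty_iff.2 ?_⟩
  exact Crystal.isEmpty_addEquiv_pi (Y := fun p : {p : ℕ × ℕ // p.1 + p.2 = 4} => Hc p.1.1 p.1.2)
    Crystal.exists_forall_two_nsmul_mem_zmultiples (p := ⟨(2, 2), rfl⟩) (q := ⟨(4, 0), rfl⟩)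
    (by decide) Crystal.exists_four_nsmul_eq_zero_Hc_two_two
    Crystal.exists_four_nsmul_eq_zero_Hc_four_zero
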